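/- arXiv:1710.07261 — 5 statements merged into one kernel-verified Lean document; each statement's English description precedes it below -/
import Mathlib

section
/- Let k, l ≥ 2 be multiplicatively independent integers, let a be a k-automatic sequence and let b be an l-automatic sequence (with values in a finite alphabet Ω). If a and b coincide almost everywhere, then there exists a periodic sequence c such that a coincides with c almost everywhere and b coincides with c almost everywhere. -/
open Filter

/-- The upper density of a set of natural numbers:
`limsup_{n → ∞} |A ∩ [0,n)| / n`. -/
noncomputable def upperDensity (A : Set ℕ) : ℝ :=
  limsup (fun n : ℕ => (Nat.card ↥(A ∩ Set.Iio n) : ℝ) / n) atTop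

/-- The base-`k` representation of `n` as a word over `Σ_k = Fin k`, read starting
from the leading digit, with no leading zeros (junk value `[]` if `k ≤ 1`;
the representation of `0` is the empty word). -/
def kRepr (k n : ℕ) : List (Fin k) :=
  if h : 1 < k then
    (Nat.digits k n).reverse.pmap (fun d hd => (⟨d, hd⟩ : Fin k))
      (fun d hd => Nat.digits_lt_base h (List.mem_reverse.mp hd))
  else []

/-- Run a deterministic automaton with transition function `δ` from the state `s`
on the word `w`, reading `w` from the left: the extended transition function `δ*`. -/
def run {S : Type*} {k : ℕ} (δ : S → Fin k → S) (s : S) (w : List (Fin k)) : S :=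
  w.foldl δ s

/-- A sequence `a : ℕ → Ω` is `k`-automatic if it is produced by a deterministic
finite automaton with output, reading the base-`k` representation of the input
starting from the leading digit. -/
def IsAutomatic {Ω : Type*} (k : ℕ) (a : ℕ → Ω) : Prop :=
  ∃ (S : Type) (_ : Fintype S) (δ : S → Fin k → S) (s₀ : S) (τ : S → Ω),
    ∀ n : ℕ, a n = τ (run δ s₀ (kRepr k n))

/-- Two integers are multiplicatively independent if no nontrivial powers of them
coincide (equivalently, they are not both powers of a common integer). -/
def MultIndep (k l : ℕ) : Prop :=
  ∀ i j : ℕ, k ^ i = l ^ j → i = 0 ∧ j = 0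

/-- The finite word `w` occurs in the sequence `a` at position `i`. -/
def OccursAt {Ω : Type*} (a : ℕ → Ω) (w : List Ω) (i : ℕ) : Prop :=
  ∀ (j : ℕ) (h : j < w.length), w.get ⟨j, h⟩ = a (i + j)

/-- The finite word `w` is a factor of the sequence `a`. -/
def IsFactor {Ω : Type*} (a : ℕ → Ω) (w : List Ω) : Prop :=
  ∃ i : ℕ, OccursAt a w i

/-- A sequence is uniformly recurrent if each of its factors occurs in it with
bounded gaps. -/
def UniformlyRecurrent {Ω : Type*} (a : ℕ → Ω) : Prop :=
  ∀ w : List Ω, IsFactor a w →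
    ∃ C : ℕ, ∀ N : ℕ, ∃ i : ℕ, N ≤ i ∧ i ≤ N + C ∧ OccursAt a w i

/-- A strongly connected component of an automaton: a nonempty set of states closed
under all transitions and such that each of its states can be reached from each
other one by some word. -/
def IsSCC {S : Type*} {k : ℕ} (δ : S → Fin k → S) (C : Set S) : Prop :=
  C.Nonempty ∧ (∀ s ∈ C, ∀ u : Fin k, δ s u ∈ C) ∧
    ∀ s ∈ C, ∀ s' ∈ C, ∃ w : List (Fin k), run δ s w = s'

/-! ### Negligible sets -/

/-- A set of natural numbers is negligible if its counting function is `o(n)`. -/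
def Negligible (A : Set ℕ) : Prop :=
  ∀ D : ℕ, ∃ C : ℕ, ∀ n : ℕ, D * (A ∩ Set.Iio n).ncard ≤ n + C

lemma finite_inter_Iio (A : Set ℕ) (n : ℕ) : (A ∩ Set.Iio n).Finite :=
  (Set.finite_Iio n).inter_of_right A

lemma ncard_inter_Iio_le (A : Set ℕ) (n : ℕ) : (A ∩ Set.Iio n).ncard ≤ n := by
  calc (A ∩ Set.Iio n).ncard ≤ (Set.Iio n).ncard :=
        Set.ncard_le_ncard Set.inter_subset_right (Set.finite_Iio n)
    _ = n := by simp

lemma Negligible.mono {A B : Set ℕ} (hB : Negligible B) (h : A ⊆ B) : Negligible A := by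
  intro D
  obtain ⟨C, hC⟩ := hB D
  refine ⟨C, fun n => le_trans ?_ (hC n)⟩
  exact Nat.mul_le_mul_left _
    (Set.ncard_le_ncard (Set.inter_subset_inter_left _ h) (finite_inter_Iio B n))

lemma Negligible.union {A B : Set ℕ} (hA : Negligible A) (hB : Negligible B) :
    Negligible (A ∪ B) := by
  intro D
  obtain ⟨C, hC⟩ := hA (2 * D)
  obtain ⟨C', hC'⟩ := hB (2 * D)
  refine ⟨C + C', fun n => ?_⟩
  have h : ((A ∪ B) ∩ Set.Iio n).ncard ≤ (A ∩ Set.Iio n).ncard + (B ∩ Set.Iio n).ncard := by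
    rw [Set.union_inter_distrib_right]
    exact Set.ncard_union_le _ _
  have h' := Nat.mul_le_mul_left D h
  have := hC n
  have := hC' n
  rw [mul_add] at h'
  rw [mul_assoc] at *
  omega

lemma negligible_of_upperDensity_eq_zero {A : Set ℕ} (h : upperDensity A = 0) :
    Negligible A := by
  intro D
  have hlt : upperDensity A < 1 / ((D : ℝ) + 1) := by rw [h]; positivity
  have hb : IsBoundedUnder (· ≤ ·) atTop
      (fun n : ℕ => (Nat.card ↥(A ∩ Set.Iio n) : ℝ) / n) := by
    refine isBoundedUnder_of ⟨1, fun n => ?_⟩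
    refine div_le_one_of_le₀ ?_ (Nat.cast_nonneg n)
    rw [Nat.card_coe_set_eq]
    exact_mod_cast ncard_inter_Iio_le A n
  obtain ⟨N, hN⟩ := eventually_atTop.1 (eventually_lt_of_limsup_lt hlt hb)
  refine ⟨D * N, fun n => ?_⟩
  have hle := ncard_inter_Iio_le A n
  rcases lt_or_ge n N with hn | hn
  · calc D * (A ∩ Set.Iio n).ncard ≤ D * N := Nat.mul_le_mul_left _ (hle.trans hn.le)
      _ ≤ n + D * N := Nat.le_add_left _ _
  · rcases Nat.eq_zero_or_pos n with rfl | hpos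
    · simp
    · have h1 := hN n hn
      rw [Nat.card_coe_set_eq, div_lt_div_iff₀ (by exact_mod_cast hpos) (by positivity)] at h1
      have h2 : (A ∩ Set.Iio n).ncard * (D + 1) < 1 * n := by exact_mod_cast h1
      nlinarith

lemma Negligible.upperDensity_eq_zero {A : Set ℕ} (h : Negligible A) :
    upperDensity A = 0 := by
  refine Tendsto.limsup_eq ?_
  rw [Metric.tendsto_atTop]
  intro ε hε
  obtain ⟨D, hD⟩ := exists_nat_gt (2 / ε)
  obtain ⟨C, hC⟩ := h D
  refine ⟨C + 1, fun n hn => ?_⟩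
  have hD0 : (0 : ℝ) < D := lt_trans (by positivity) hD
  have hn0 : (0 : ℝ) < n := by
    have : 0 < n := by omega
    exact_mod_cast this
  have h1 : (D : ℝ) * (A ∩ Set.Iio n).ncard ≤ n + C := by exact_mod_cast hC n
  have h2 : (C : ℝ) < n := by exact_mod_cast (by omega : C < n)
  rw [Real.dist_eq, sub_zero, abs_of_nonneg (by positivity), Nat.card_coe_set_eq,
    div_lt_iff₀ hn0]
  rw [div_lt_iff₀ hε] at hD
  by_contra hcon
  push Not at hcon
  have := mul_le_mul_of_nonneg_left hcon hD0.le
  nlinarith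

/-- A negligible set leaves free windows of any given length in long intervals whose
starting point is at most a bounded multiple of their length. -/
lemma Negligible.exists_free_window {A : Set ℕ} (hA : Negligible A) {L : ℕ} (hL : 1 ≤ L)
    (D : ℕ) : ∃ N : ℕ, ∀ H u : ℕ, N ≤ H → u ≤ D * H →
      ∃ z, u ≤ z ∧ z + L ≤ u + H ∧ ∀ s < L, z + s ∉ A := by
  obtain ⟨C, hC⟩ := hA (2 * L * (D + 1))
  refine ⟨C + 2 * (D + 1) * L + 1, fun H u hH hu => ?_⟩
  by_contra! hcon
  have hex : ∀ i, ∃ s, i < H / L → s < L ∧ u + i * L + s ∈ A := by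
    intro i
    by_cases hi : i < H / L
    · have h1 : (i + 1) * L ≤ H / L * L := Nat.mul_le_mul_right _ hi
      have h2 := Nat.div_mul_le_self H L
      obtain ⟨s, hs, hs'⟩ := hcon (u + i * L) (by omega) (by rw [add_mul] at h1; omega)
      exact ⟨s, fun _ => ⟨hs, hs'⟩⟩
    · exact ⟨0, fun h => absurd h hi⟩
  choose s hs using hex
  have hcard : H / L ≤ (A ∩ Set.Iio (u + H)).ncard := by
    have hinj : Set.InjOn (fun i => u + i * L + s i) (Set.Iio (H / L)) := by
      intro i hi j hj hij
      have h1 := (hs i hi).1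
      have h2 := (hs j hj).1
      simp only at hij
      have h3 : i * L + s i = j * L + s j := by omega
      have h4 : (i * L + s i) / L = i := by
        rw [mul_comm, Nat.mul_add_div hL, Nat.div_eq_of_lt h1, add_zero]
      have h5 : (j * L + s j) / L = j := by
        rw [mul_comm, Nat.mul_add_div hL, Nat.div_eq_of_lt h2, add_zero]
      rw [← h4, ← h5, h3]
    calc H / L = (Set.Iio (H / L)).ncard := by simp
      _ = ((fun i => u + i * L + s i) '' Set.Iio (H / L)).ncard :=
          hinj.ncard_image.symm
      _ ≤ _ := by
          refine Set.ncard_le_ncard ?_ (finite_inter_Iio _ _)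
          rintro _ ⟨i, hi, rfl⟩
          refine ⟨(hs i hi).2, ?_⟩
          have h1 : (i + 1) * L ≤ H / L * L := Nat.mul_le_mul_right _ hi
          have h2 := Nat.div_mul_le_self H L
          have h3 := (hs i hi).1
          rw [add_mul] at h1
          simp only [Set.mem_Iio]
          omega
  have h1 := hC (u + H)
  have h2 := Nat.mul_le_mul_left (2 * L * (D + 1)) hcard
  have h3 : H < H / L * L + L := Nat.lt_div_mul_add hL
  have h4 : 2 * (D + 1) * H ≤ 2 * (D + 1) * (H / L * L + L) := Nat.mul_le_mul_left _ h3.le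
  nlinarith

/-- A set that is closed under taking prefixes in base `K`, and none of whose elements has
all its children in the set, is negligible. -/
lemma negligible_of_branching {K : ℕ} (hK : 1 ≤ K) {B : Set ℕ}
    (hparent : ∀ x d, 1 ≤ x → d < K → x * K + d ∈ B → x ∈ B)
    (hchild : ∀ x, 1 ≤ x → ∃ d < K, x * K + d ∉ B) : Negligible B := by
  have hstep : ∀ n, (B ∩ Set.Iio (n * K)).ncard ≤ (K - 1) * (B ∩ Set.Iio n).ncard + K := by
    intro n
    choose d hd hdB using fun x => hchild (x + 1) (by omega)
    classical
    let F : Finset ℕ := (finite_inter_Iio B n).toFinset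
    have hsub : B ∩ Set.Iio (n * K) ⊆
        ((F.biUnion fun x => (((Finset.range K).erase (d (x - 1))).image fun e => x * K + e)) ∪
          Finset.range K : Finset ℕ) := by
      rintro m ⟨hmB, hm⟩
      have hm' : m / K < n := (Nat.div_lt_iff_lt_mul hK).2 hm
      have hmod : m % K < K := Nat.mod_lt _ hK
      have heq : m / K * K + m % K = m := Nat.div_add_mod' m K
      simp only [Finset.coe_union, Set.mem_union, Finset.mem_coe, Finset.mem_range,
        Finset.mem_biUnion, Finset.mem_image, Finset.mem_erase]
      rcases Nat.eq_zero_or_pos (m / K) with h0 | hpos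
      · right
        rw [h0] at heq
        omega
      · left
        refine ⟨m / K, ?_, m % K, ⟨?_, hmod⟩, heq⟩
        · simp only [F, Set.Finite.mem_toFinset]
          exact ⟨hparent _ _ hpos hmod (by rwa [heq]), hm'⟩
        · intro hcon
          have := hdB (m / K - 1)
          rw [Nat.sub_add_cancel hpos, ← hcon, heq] at this
          exact this hmB
    have h1 := Set.ncard_le_ncard hsub (Finset.finite_toSet _)
    rw [Set.ncard_coe_finset] at h1
    refine h1.trans ((Finset.card_union_le _ _).trans ?_)
    rw [Finset.card_range]
    refine Nat.add_le_add_right (Finset.card_biUnion_le.trans ?_) _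
    rw [Set.ncard_eq_toFinset_card _ (finite_inter_Iio B n), mul_comm, ← smul_eq_mul]
    refine Finset.sum_le_card_nsmul _ _ _ fun x _ => Finset.card_image_le.trans ?_
    rw [Finset.card_erase_of_mem (by simpa using hd _), Finset.card_range]
  have hpow : ∀ i, ∃ C, ∀ n, K ^ i * (B ∩ Set.Iio n).ncard ≤ (K - 1) ^ i * n + C := by
    intro i
    induction i with
    | zero => exact ⟨0, fun n => by simpa using ncard_inter_Iio_le B n⟩
    | succ i ih =>
      obtain ⟨C, hC⟩ := ih
      refine ⟨K * (K - 1) * ((K - 1) ^ i + C) + K ^ (i + 1) * K, fun n => ?_⟩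
      have hn : n ≤ (n / K + 1) * K := by
        have := Nat.lt_div_mul_add (a := n) hK
        rw [add_mul]; omega
      have h1 : (B ∩ Set.Iio n).ncard ≤ (B ∩ Set.Iio ((n / K + 1) * K)).ncard :=
        Set.ncard_le_ncard (Set.inter_subset_inter_right _ (Set.Iio_subset_Iio hn))
          (finite_inter_Iio _ _)
      have h2 := h1.trans (hstep (n / K + 1))
      have h3 := hC (n / K + 1)
      have h4 : n / K * K ≤ n := Nat.div_mul_le_self n K
      calc K ^ (i + 1) * (B ∩ Set.Iio n).ncard
          ≤ K ^ (i + 1) * ((K - 1) * (B ∩ Set.Iio (n / K + 1)).ncard + K) :=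
            Nat.mul_le_mul_left _ h2
        _ = K * (K - 1) * (K ^ i * (B ∩ Set.Iio (n / K + 1)).ncard) + K ^ (i + 1) * K := by ring
        _ ≤ K * (K - 1) * ((K - 1) ^ i * (n / K + 1) + C) + K ^ (i + 1) * K := by gcongr
        _ = (K - 1) ^ (i + 1) * (n / K * K) + (K * (K - 1) * ((K - 1) ^ i + C)
              + K ^ (i + 1) * K) := by ring
        _ ≤ _ := by gcongr
  intro D
  have hlim : Tendsto (fun i : ℕ => (D : ℝ) * (((K - 1 : ℕ) : ℝ) / K) ^ i) atTop (nhds (D * 0)) := by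
    refine (tendsto_pow_atTop_nhds_zero_of_lt_one (by positivity) ?_).const_mul _
    rw [div_lt_one (by exact_mod_cast hK)]
    exact_mod_cast (by omega : K - 1 < K)
  rw [mul_zero] at hlim
  obtain ⟨i, hi⟩ := (hlim.eventually (gt_mem_nhds (zero_lt_one' ℝ))).exists
  have hKi : (0 : ℝ) < (K : ℝ) ^ i := by
    have : (0 : ℝ) < K := by exact_mod_cast hK
    positivity
  rw [div_pow, mul_div_assoc', div_lt_one hKi] at hi
  have hi' : D * (K - 1) ^ i < K ^ i := by exact_mod_cast hi
  obtain ⟨C, hC⟩ := hpow i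
  refine ⟨D * C, fun n => ?_⟩
  have hKi' : 0 < K ^ i := Nat.pow_pos hK
  refine Nat.le_of_mul_le_mul_left ?_ hKi'
  calc K ^ i * (D * (B ∩ Set.Iio n).ncard) = D * (K ^ i * (B ∩ Set.Iio n).ncard) := by ring
    _ ≤ D * ((K - 1) ^ i * n + C) := Nat.mul_le_mul_left _ (hC n)
    _ = D * (K - 1) ^ i * n + D * C := by ring
    _ ≤ K ^ i * n + K ^ i * (D * C) := by
        refine Nat.add_le_add (Nat.mul_le_mul_right _ hi'.le) ?_
        exact Nat.le_mul_of_pos_left _ hKi'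
    _ = K ^ i * (n + D * C) := by ring

lemma Negligible.preimage_div {A : Set ℕ} (hA : Negligible A) {M : ℕ} (hM : 1 ≤ M) :
    Negligible {n | n / M ∈ A} := by
  intro D
  obtain ⟨C, hC⟩ := hA (D * M)
  refine ⟨1 + C, fun n => ?_⟩
  have hcard : ({n | n / M ∈ A} ∩ Set.Iio n).ncard ≤ (A ∩ Set.Iio (n / M + 1)).ncard * M := by
    have hinj : Set.InjOn (fun m => (m / M, m % M)) ({n | n / M ∈ A} ∩ Set.Iio n) := by
      intro i _ j _ hij
      simp only [Prod.mk.injEq] at hij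
      rw [← Nat.div_add_mod i M, ← Nat.div_add_mod j M, hij.1, hij.2]
    rw [← hinj.ncard_image]
    calc _ ≤ ((A ∩ Set.Iio (n / M + 1)) ×ˢ Set.Iio M).ncard := by
          refine Set.ncard_le_ncard ?_ ((finite_inter_Iio _ _).prod (Set.finite_Iio _))
          rintro _ ⟨m, ⟨hmA, hm⟩, rfl⟩
          refine ⟨⟨hmA, ?_⟩, Nat.mod_lt _ hM⟩
          exact Nat.lt_succ_of_le (Nat.div_le_div_right (le_of_lt hm))
      _ = _ := by rw [Set.ncard_prod]; simp
  calc D * ({n | n / M ∈ A} ∩ Set.Iio n).ncard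
      ≤ D * ((A ∩ Set.Iio (n / M + 1)).ncard * M) := Nat.mul_le_mul_left _ hcard
    _ = D * M * (A ∩ Set.Iio (n / M + 1)).ncard := by ring
    _ ≤ n / M + 1 + C := hC _
    _ ≤ n + (1 + C) := by have := Nat.div_le_self n M; omega

/-! ### Labelings compatible with digit extension -/

/-- In base `k`, the label of a child `x * k + d` of a positive integer `x` depends only on
the label of `x` and on the digit `d`. -/
def DigitCompatible {S : Type*} (k : ℕ) (α : ℕ → S) : Prop :=
  ∀ x y d, 1 ≤ x → 1 ≤ y → α x = α y → d < k → α (x * k + d) = α (y * k + d)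

lemma kRepr_mul_add {k : ℕ} (hk : 1 < k) {x d : ℕ} (hx : 1 ≤ x) (hd : d < k) :
    kRepr k (x * k + d) = kRepr k x ++ [⟨d, hd⟩] := by
  have h : Nat.digits k (x * k + d) = d :: Nat.digits k x := by
    rw [add_comm, mul_comm]
    exact Nat.digits_add k hk d x hd (Or.inr (by omega))
  simp [kRepr, hk, h, List.pmap_append]

lemma IsAutomatic.exists_digitCompatible {Ω : Type*} {k : ℕ} (hk : 1 < k) {a : ℕ → Ω}
    (ha : IsAutomatic k a) :
    ∃ (S : Type) (_ : Finite S) (α : ℕ → S) (τ : S → Ω),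
      (∀ n, a n = τ (α n)) ∧ DigitCompatible k α := by
  obtain ⟨S, hS, δ, s₀, τ, h⟩ := ha
  refine ⟨S, inferInstance, fun n => run δ s₀ (kRepr k n), τ, h, ?_⟩
  intro x y d hx hy hxy hd
  simp only [kRepr_mul_add hk hx hd, kRepr_mul_add hk hy hd, run, List.foldl_append] at hxy ⊢
  rw [hxy]

lemma DigitCompatible.pow {S : Type*} {k : ℕ} (hk : 1 ≤ k) {α : ℕ → S}
    (h : DigitCompatible k α) (t : ℕ) : DigitCompatible (k ^ t) α := by
  induction t with
  | zero =>
    intro x y d _ _ hxy hd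
    obtain rfl : d = 0 := by simpa using hd
    simpa using hxy
  | succ t ih =>
    intro x y d hx hy hxy hd
    have hdiv : d / k < k ^ t := (Nat.div_lt_iff_lt_mul hk).2 (by rwa [pow_succ] at hd)
    have hsplit : ∀ z, z * k ^ (t + 1) + d = (z * k ^ t + d / k) * k + d % k := by
      intro z
      conv_lhs => rw [← Nat.div_add_mod' d k]
      ring
    have hpos : ∀ z, 1 ≤ z → 1 ≤ z * k ^ t + d / k := fun z hz =>
      le_add_right (Nat.mul_pos hz (Nat.pow_pos hk))
    rw [hsplit, hsplit]
    exact h _ _ _ (hpos x hx) (hpos y hy) (ih x y _ hx hy hxy hdiv) (Nat.mod_lt _ hk)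

lemma exists_idempotent_pow {M : Type*} [Monoid M] [Finite M] (m : M) :
    ∃ e, 1 ≤ e ∧ m ^ (e + e) = m ^ e := by
  obtain ⟨i, j, hij, h⟩ : ∃ i j : ℕ, i < j ∧ m ^ (i + 1) = m ^ (j + 1) := by
    obtain ⟨i, j, hne, h⟩ := Finite.exists_ne_map_eq_of_infinite fun i : ℕ => m ^ (i + 1)
    rcases lt_or_gt_of_ne hne with hlt | hlt
    · exact ⟨i, j, hlt, h⟩
    · exact ⟨j, i, hlt, h.symm⟩
  obtain ⟨c, rfl⟩ : ∃ c, j = i + c := ⟨j - i, by omega⟩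
  have hc : 1 ≤ c := by omega
  have hstep : ∀ n, i + 1 ≤ n → m ^ (n + c) = m ^ n := by
    intro n hn
    obtain ⟨r, rfl⟩ := Nat.exists_eq_add_of_le hn
    rw [show i + 1 + r + c = i + c + 1 + r by ring, pow_add, ← h, ← pow_add]
  have hmul : ∀ s n, i + 1 ≤ n → m ^ (n + s * c) = m ^ n := by
    intro s
    induction s with
    | zero => simp
    | succ s ih =>
      intro n hn
      rw [show n + (s + 1) * c = n + s * c + c by ring, hstep _ (by omega), ih n hn]
  exact ⟨(i + 1) * c, Nat.mul_pos (by omega) hc, hmul _ _ (Nat.le_mul_of_pos_right _ hc)⟩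

/-- The set of labels of the children of `x` in base `K`. -/
def reach {S : Type*} (K : ℕ) (α : ℕ → S) (x : ℕ) : Set S :=
  {s | ∃ d < K, α (x * K + d) = s}

lemma DigitCompatible.reach_congr {S : Type*} {K : ℕ} {α : ℕ → S} (h : DigitCompatible K α)
    {x y : ℕ} (hx : 1 ≤ x) (hy : 1 ≤ y) (hxy : α x = α y) : reach K α x = reach K α y := by
  ext s
  constructor
  · rintro ⟨d, hd, rfl⟩
    exact ⟨d, hd, (h x y d hx hy hxy hd).symm⟩
  · rintro ⟨d, hd, rfl⟩
    exact ⟨d, hd, h x y d hx hy hxy hd⟩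

lemma DigitCompatible.exists_pow_reach_subset {S : Type*} [Finite S] {k : ℕ} (hk : 1 ≤ k)
    {α : ℕ → S} (h : DigitCompatible k α) :
    ∃ e, 1 ≤ e ∧ ∀ x d, 1 ≤ x → d < k ^ e →
      reach (k ^ e) α (x * k ^ e + d) ⊆ reach (k ^ e) α x := by
  let φ : Function.End (Set S) := fun A => {s | ∃ x, 1 ≤ x ∧ α x ∈ A ∧ s ∈ reach k α x}
  have : Finite (Function.End (Set S)) := inferInstanceAs (Finite (Set S → Set S))
  have hφ : ∀ n x, 1 ≤ x → (φ ^ n) {α x} = reach (k ^ n) α x := by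
    intro n
    induction n with
    | zero =>
      intro x _
      ext s
      change s = α x ↔ _
      simp [reach, eq_comm]
    | succ n ih =>
      intro x hx
      rw [pow_succ']
      change φ ((φ ^ n) {α x}) = _
      rw [ih x hx]
      ext s
      constructor
      · rintro ⟨y, hy, ⟨d, hd, hyd⟩, e, he, rfl⟩
        refine ⟨d * k + e, ?_, ?_⟩
        · rw [pow_succ]; nlinarith
        · have hpos : 1 ≤ x * k ^ n + d := le_add_right (Nat.mul_pos hx (Nat.pow_pos hk))
          rw [← h _ _ e hpos hy hyd he]
          congr 1
          ring
      · rintro ⟨d, hd, rfl⟩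
        have hdiv : d / k < k ^ n := (Nat.div_lt_iff_lt_mul hk).2 (by rwa [pow_succ] at hd)
        refine ⟨x * k ^ n + d / k, le_add_right (Nat.mul_pos hx (Nat.pow_pos hk)),
          ⟨d / k, hdiv, rfl⟩, d % k, Nat.mod_lt _ hk, ?_⟩
        congr 1
        conv_rhs => rw [← Nat.div_add_mod' d k]
        ring
  obtain ⟨e, he, hidem⟩ := exists_idempotent_pow φ
  refine ⟨e, he, fun x d hx hd => ?_⟩
  rw [← hφ e x hx, ← hidem, hφ _ x hx]
  rintro _ ⟨d', hd', rfl⟩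
  refine ⟨d * k ^ e + d', ?_, ?_⟩
  · rw [pow_add]; nlinarith
  · congr 1
    ring

/-! ### Recurrent positions -/

/-- Positive integers whose label is again the label of a child of each of their children. -/
def recurrentSet {S : Type*} (K : ℕ) (α : ℕ → S) : Set ℕ :=
  {x | 1 ≤ x ∧ ∀ d < K, α x ∈ reach K α (x * K + d)}

section Recurrent

variable {S : Type*} {K : ℕ} {α : ℕ → S}

lemma reach_trans (h : DigitCompatible K α)
    (hsub : ∀ x d, 1 ≤ x → d < K → reach K α (x * K + d) ⊆ reach K α x)
    {x y : ℕ} {s : S} (hx : 1 ≤ x) (hy : 1 ≤ y) (hs : s ∈ reach K α x)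
    (hxy : α x ∈ reach K α y) : s ∈ reach K α y := by
  obtain ⟨d, hd, hdx⟩ := hxy
  refine hsub y d hy hd ?_
  have hK : 1 ≤ K := by omega
  have hpos : 1 ≤ y * K + d := le_add_right (Nat.mul_pos hy hK)
  rwa [h.reach_congr hpos hx hdx]

lemma child_mem_recurrentSet (h : DigitCompatible K α)
    (hsub : ∀ x d, 1 ≤ x → d < K → reach K α (x * K + d) ⊆ reach K α x)
    {x d : ℕ} (hx : x ∈ recurrentSet K α) (hd : d < K) : x * K + d ∈ recurrentSet K α := by
  have hK : 1 ≤ K := by omega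
  have hpos : ∀ y e, 1 ≤ y → 1 ≤ y * K + e := fun y e hy => le_add_right (Nat.mul_pos hy hK)
  refine ⟨hpos x d hx.1, fun e he => ?_⟩
  refine reach_trans h hsub hx.1 (hpos _ _ (hpos _ _ hx.1)) ⟨d, hd, rfl⟩ ?_
  obtain ⟨f, hf, hfe⟩ := hsub x d hx.1 hd ⟨e, he, rfl⟩
  rw [← h.reach_congr (hpos _ _ hx.1) (hpos _ _ (hpos _ _ hx.1)) hfe]
  exact hx.2 f hf

lemma exists_child_mem_recurrentSet [Finite S] (hK : 1 ≤ K) (h : DigitCompatible K α)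
    (hsub : ∀ x d, 1 ≤ x → d < K → reach K α (x * K + d) ⊆ reach K α x)
    {x : ℕ} (hx : 1 ≤ x) : ∃ d < K, x * K + d ∈ recurrentSet K α := by
  have hpos : ∀ y e, 1 ≤ y → 1 ≤ y * K + e := fun y e hy => le_add_right (Nat.mul_pos hy hK)
  obtain ⟨d, hd, hmin⟩ := Set.exists_min_image (Set.Iio K)
    (fun d => (reach K α (x * K + d)).ncard) (Set.finite_Iio K) ⟨0, hK⟩
  have hd : d < K := hd
  have heq : ∀ f < K, reach K α ((x * K + d) * K + f) = reach K α (x * K + d) := by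
    intro f hf
    refine Set.eq_of_subset_of_ncard_le (hsub _ _ (hpos _ _ hx) hf) ?_
    obtain ⟨g, hg, hgf⟩ := hsub x d hx hd ⟨f, hf, rfl⟩
    rw [← h.reach_congr (hpos _ _ hx) (hpos _ _ (hpos _ _ hx)) hgf]
    exact hmin g hg
  obtain ⟨g, hg, hg0⟩ := hsub x d hx hd ⟨0, hK, rfl⟩
  refine ⟨g, hg, hpos _ _ hx, fun f hf => ?_⟩
  have h1 : α ((x * K + g) * K + f) = α (((x * K + d) * K + 0) * K + f) :=
    h _ _ f (hpos _ _ hx) (hpos _ _ (hpos _ _ hx)) hg0 hf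
  obtain ⟨c, hc, hcf⟩ := hsub (x * K + d) 0 (hpos _ _ hx) hK ⟨f, hf, rfl⟩
  rw [h.reach_congr (hpos _ _ (hpos _ _ hx)) (hpos _ _ (hpos _ _ hx)) (h1.trans hcf.symm),
    heq c hc]
  exact ⟨0, hK, hg0.symm⟩

lemma negligible_compl_recurrentSet [Finite S] (hK : 1 ≤ K) (h : DigitCompatible K α)
    (hsub : ∀ x d, 1 ≤ x → d < K → reach K α (x * K + d) ⊆ reach K α x) :
    Negligible (recurrentSet K α)ᶜ := by
  refine negligible_of_branching hK (fun x d _ hd hxd hx => ?_) fun x hx => ?_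
  · exact hxd (child_mem_recurrentSet h hsub hx hd)
  · obtain ⟨d, hd, hmem⟩ := exists_child_mem_recurrentSet hK h hsub hx
    exact ⟨d, hd, fun hcon => hcon hmem⟩

lemma label_mem_reach_descendant (h : DigitCompatible K α)
    (hsub : ∀ x d, 1 ≤ x → d < K → reach K α (x * K + d) ⊆ reach K α x)
    (hK : 1 ≤ K) {x : ℕ} (hx : x ∈ recurrentSet K α) (i : ℕ) :
    ∀ j < K ^ i, x * K ^ i + j ∈ recurrentSet K α ∧ α x ∈ reach K α (x * K ^ i + j) := by
  induction i with
  | zero =>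
    intro j hj
    obtain rfl : j = 0 := by simpa using hj
    simpa using ⟨hx, hsub x 0 hx.1 hK (hx.2 0 hK)⟩
  | succ i ih =>
    intro j hj
    have hdiv : j / K < K ^ i := (Nat.div_lt_iff_lt_mul hK).2 (by rwa [pow_succ] at hj)
    have hmod : j % K < K := Nat.mod_lt _ hK
    obtain ⟨h1, h2⟩ := ih _ hdiv
    have heq : x * K ^ (i + 1) + j = (x * K ^ i + j / K) * K + j % K := by
      conv_lhs => rw [← Nat.div_add_mod' j K]
      ring
    have h3 := child_mem_recurrentSet h hsub h1 hmod
    rw [heq]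
    exact ⟨h3, reach_trans h hsub h1.1 h3.1 h2 (h1.2 _ hmod)⟩

/-- Every pair of consecutive labels below a recurrent position occurs at a fixed depth
below each of its descendants. -/
lemma exists_depth_of_consecutive [Finite S] (hK : 1 ≤ K) (h : DigitCompatible K α)
    (hsub : ∀ x d, 1 ≤ x → d < K → reach K α (x * K + d) ⊆ reach K α x)
    {x : ℕ} (hx : x ∈ recurrentSet K α) :
    ∃ T : ℕ, ∀ i j, j + 1 < K ^ i → ∀ i' j', j' < K ^ i' →
      ∃ c, c + 1 < K ^ T ∧ α ((x * K ^ i' + j') * K ^ T + c) = α (x * K ^ i + j) ∧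
        α ((x * K ^ i' + j') * K ^ T + (c + 1)) = α (x * K ^ i + (j + 1)) := by
  classical
  cases nonempty_fintype S
  let P : S × S → ℕ → Prop := fun s i =>
    ∃ j, j + 1 < K ^ i ∧ α (x * K ^ i + j) = s.1 ∧ α (x * K ^ i + (j + 1)) = s.2
  have hf : ∀ s, ∃ i, (∃ i', P s i') → P s i := by
    intro s
    by_cases hs : ∃ i', P s i'
    · exact ⟨hs.choose, fun _ => hs.choose_spec⟩
    · exact ⟨0, fun hs' => absurd hs' hs⟩
  choose f hf using hf
  refine ⟨Finset.univ.sup f + 1, fun i j hj i' j' hj' => ?_⟩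
  obtain ⟨j₀, hj₀, h1, h2⟩ := hf (α (x * K ^ i + j), α (x * K ^ i + (j + 1)))
    ⟨i, j, hj, rfl, rfl⟩
  have hle : f (α (x * K ^ i + j), α (x * K ^ i + (j + 1))) ≤ Finset.univ.sup f :=
    Finset.le_sup (Finset.mem_univ _)
  generalize f (α (x * K ^ i + j), α (x * K ^ i + (j + 1))) = i₀ at *
  obtain ⟨r, hr⟩ := Nat.exists_eq_add_of_le hle
  have hlt : j' * K ^ r < K ^ (i' + r) := by
    rw [pow_add]; exact Nat.mul_lt_mul_of_pos_right hj' (Nat.pow_pos hK)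
  obtain ⟨hz, d, hd, hdx⟩ := label_mem_reach_descendant h hsub hK hx (i' + r) _ hlt
  have hbound : d * K ^ i₀ + j₀ + 1 < K ^ (Finset.univ.sup f + 1) := by
    calc d * K ^ i₀ + j₀ + 1 < d * K ^ i₀ + K ^ i₀ := by omega
      _ = (d + 1) * K ^ i₀ := by ring
      _ ≤ K * K ^ i₀ := Nat.mul_le_mul_right _ hd
      _ = K ^ (i₀ + 1) := by ring
      _ ≤ _ := Nat.pow_le_pow_right hK (by omega)
  have hpos : 1 ≤ (x * K ^ (i' + r) + j' * K ^ r) * K + d :=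
    le_add_right (Nat.mul_pos hz.1 hK)
  have hcomm : ∀ c, (x * K ^ i' + j') * K ^ (Finset.univ.sup f + 1) + (d * K ^ i₀ + c) =
      ((x * K ^ (i' + r) + j' * K ^ r) * K + d) * K ^ i₀ + c := by
    intro c
    rw [hr]
    ring
  refine ⟨d * K ^ i₀ + j₀, hbound, ?_, ?_⟩
  · rw [hcomm, h.pow hK i₀ _ x j₀ hpos hx.1 hdx (by omega), h1]
  · rw [add_assoc, hcomm, h.pow hK i₀ _ x (j₀ + 1) hpos hx.1 hdx hj₀, h2]

end Recurrent

/-! ### Periods inside blocks -/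

lemma MultIndep.pow {k l : ℕ} (h : MultIndep k l) {e f : ℕ} (he : 1 ≤ e) (hf : 1 ≤ f) :
    MultIndep (k ^ e) (l ^ f) := by
  intro i j hij
  rw [← pow_mul, ← pow_mul] at hij
  obtain ⟨h1, h2⟩ := h _ _ hij
  rw [mul_eq_zero] at h1 h2
  omega

lemma MultIndep.symm {k l : ℕ} (h : MultIndep k l) : MultIndep l k := fun i j hij =>
  (h j i hij.symm).symm

lemma MultIndep.exists_not_dvd {K l : ℕ} (hK : 2 ≤ K) (hl : 2 ≤ l) (h : MultIndep K l)
    (N : ℕ) : ∃ m n, 2 * l ^ n ≤ K ^ m ∧ ∀ c, 0 < c → c < N → ¬ l ^ n ∣ c * K ^ m := by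
  by_contra! hcon
  have hlog : ∀ m, ∃ n, 2 * l ^ n ≤ K ^ (m + 1) ∧ K ^ (m + 1) < 2 * l * l ^ n := by
    intro m
    have hpos : K ^ (m + 1) / 2 ≠ 0 := by
      have : K ^ 1 ≤ K ^ (m + 1) := Nat.pow_le_pow_right (by omega) (by omega)
      rw [pow_one] at this
      omega
    refine ⟨Nat.log l (K ^ (m + 1) / 2), ?_, ?_⟩
    · have := Nat.pow_log_le_self l hpos
      omega
    · have := Nat.lt_pow_succ_log_self (b := l) (by omega) (K ^ (m + 1) / 2)
      rw [Nat.succ_eq_add_one, pow_succ l, mul_comm] at this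
      rw [mul_assoc]
      omega
  choose n hn hn' using hlog
  choose c hc hcN hdvd using fun m => hcon (m + 1) (n m) (hn m)
  choose e he using hdvd
  have hlpos : ∀ i, 0 < l ^ i := fun i => Nat.pow_pos (by omega)
  have hbound : ∀ m, e m < 2 * l * N := by
    intro m
    refine Nat.lt_of_mul_lt_mul_left (a := l ^ n m) ?_
    rw [← he m]
    calc c m * K ^ (m + 1) < c m * (2 * l * l ^ n m) := Nat.mul_lt_mul_of_pos_left (hn' m) (hc m)
      _ ≤ N * (2 * l * l ^ n m) := Nat.mul_le_mul_right _ (hcN m).le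
      _ = _ := by ring
  obtain ⟨m, m', hlt, heq⟩ : ∃ m m' : ℕ, m < m' ∧ (c m = c m' ∧ e m = e m') := by
    obtain ⟨i, j, hne, h⟩ := Finite.exists_ne_map_eq_of_infinite fun m : ℕ =>
      ((⟨c m, hcN m⟩ : Fin N), (⟨e m, hbound m⟩ : Fin (2 * l * N)))
    simp only [Prod.mk.injEq, Fin.mk.injEq] at h
    rcases lt_or_gt_of_ne hne with hlt | hlt
    · exact ⟨i, j, hlt, h⟩
    · exact ⟨j, i, hlt, h.1.symm, h.2.symm⟩
  obtain ⟨r, rfl⟩ := Nat.exists_eq_add_of_le hlt.le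
  have h1 := he m
  have h2 := he (m + r)
  rw [← heq.1, ← heq.2] at h2
  have hepos : 0 < e m := by
    refine Nat.pos_of_ne_zero fun h0 => ?_
    rw [h0, mul_zero] at h1
    have := Nat.mul_pos (hc m) (Nat.pow_pos (n := m + 1) (by omega : 0 < K))
    omega
  have h3 : l ^ n m * K ^ r = l ^ n (m + r) := by
    refine Nat.eq_of_mul_eq_mul_left hepos ?_
    calc e m * (l ^ n m * K ^ r) = (l ^ n m * e m) * K ^ r := by ring
      _ = c m * K ^ (m + r + 1) := by rw [← h1]; ring
      _ = e m * l ^ n (m + r) := by rw [h2]; ring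
  have hle : n m ≤ n (m + r) := by
    refine (Nat.pow_le_pow_iff_right (by omega : 1 < l)).1 ?_
    rw [← h3]
    exact Nat.le_mul_of_pos_right _ (Nat.pow_pos (by omega))
  obtain ⟨s, hs⟩ := Nat.exists_eq_add_of_le hle
  rw [hs, pow_add] at h3
  have := (h _ _ (Nat.eq_of_mul_eq_mul_left (hlpos _) h3)).1
  omega

/-- If a sequence labelled in base `K` agrees almost everywhere with one labelled in a
multiplicatively independent base `l`, then it has, inside the blocks below any `x`, intervals
that are arbitrarily long compared to some local period. -/
lemma exists_local_period {Ω S S' : Type*} [Finite S] [Finite S'] {K l : ℕ} (hK : 2 ≤ K)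
    (hl : 2 ≤ l) (hind : MultIndep K l) {α : ℕ → S} {β : ℕ → S'} {τ : S → Ω} {τ' : S' → Ω}
    (hα : DigitCompatible K α) (hβ : DigitCompatible l β) {a b : ℕ → Ω}
    (ha : ∀ n, a n = τ (α n)) (hb : ∀ n, b n = τ' (β n)) (hab : Negligible {n | a n ≠ b n})
    {x : ℕ} (hx : 1 ≤ x) {W : ℕ} (hW : 1 ≤ W) :
    ∃ M N H p, 1 ≤ p ∧ W * p ≤ H ∧ x * K ^ M ≤ N ∧ N + H ≤ (x + 1) * K ^ M ∧
      ∀ s < H, a (N + s) = a (N + s + p) := by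
  cases nonempty_fintype S
  cases nonempty_fintype S'
  obtain ⟨R, hR⟩ : ∃ R, R = Fintype.card (S × S' × Fin W) + 1 := ⟨_, rfl⟩
  obtain ⟨m, n, hmn, hdvd⟩ := hind.exists_not_dvd hK hl R
  have hKm : 0 < K ^ m := Nat.pow_pos (by omega)
  have hln : 0 < l ^ n := Nat.pow_pos (by omega)
  have hLpos : 1 ≤ (R + 2) * K ^ m := Nat.mul_pos (by omega) hKm
  obtain ⟨N₀, hN₀⟩ := hab.exists_free_window hLpos x
  have hM : N₀ ≤ K ^ N₀ := (Nat.lt_pow_self (by omega)).le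
  obtain ⟨z, hz1, hz2, hz3⟩ := hN₀ (K ^ N₀) (x * K ^ N₀) hM le_rfl
  have hfree : ∀ n, z ≤ n → n < z + (R + 2) * K ^ m → a n = b n := by
    intro n h1 h2
    have := hz3 (n - z) (by omega)
    rw [Nat.add_sub_cancel' h1] at this
    simpa using this
  have hceil : ∀ u v : ℕ, 0 < v → ∃ w, u ≤ w * v ∧ w * v < u + v := by
    intro u v hv
    refine ⟨(u + v - 1) / v, ?_, ?_⟩
    · have := Nat.lt_div_mul_add (a := u + v - 1) hv
      omega
    · have := Nat.div_mul_le_self (u + v - 1) v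
      omega
  obtain ⟨X, hX1, hX2⟩ := hceil z (K ^ m) hKm
  choose Y hY1 hY2 using fun i => hceil ((X + i) * K ^ m) (l ^ n) hln
  have hzpos : 1 ≤ z := le_trans (Nat.mul_pos hx (Nat.pow_pos (by omega))) hz1
  have hXpos : 1 ≤ X := by
    rcases Nat.eq_zero_or_pos X with h0 | h0
    · rw [h0] at hX1; omega
    · exact h0
  have hYpos : ∀ i, 1 ≤ Y i := by
    intro i
    have h1 : 1 ≤ (X + i) * K ^ m := Nat.mul_pos (by omega) hKm
    rcases Nat.eq_zero_or_pos (Y i) with h0 | h0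
    · have := hY1 i
      rw [h0] at this; omega
    · exact h0
  choose r hr using fun i => Nat.exists_eq_add_of_le (hY1 i)
  have hrlt : ∀ i, r i < l ^ n := by
    intro i
    have := hY2 i
    have := hr i
    omega
  have hrinj : ∀ i j, i < R → j < R → i < j → r i ≠ r j := by
    intro i j _ hj hij heq
    refine hdvd (j - i) (by omega) (by omega) ⟨Y j - Y i, ?_⟩
    have h1 := hr i
    have h2 := hr j
    have h3 : (X + j) * K ^ m = (X + i) * K ^ m + (j - i) * K ^ m := by
      rw [← add_mul]; congr 1; omega
    rw [mul_comm (l ^ n), Nat.sub_mul (Y j)]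
    omega
  have hbucket : ∀ i, r i * W / l ^ n < W := by
    intro i
    rw [Nat.div_lt_iff_lt_mul hln, mul_comm]
    exact Nat.mul_lt_mul_of_pos_left (hrlt i) hW
  obtain ⟨i, j, hne, hij⟩ : ∃ i j : Fin R, i ≠ j ∧
      (α (X + i), β (Y i), (⟨r i * W / l ^ n, hbucket i⟩ : Fin W)) =
        (α (X + j), β (Y j), (⟨r j * W / l ^ n, hbucket j⟩ : Fin W)) :=
    Fintype.exists_ne_map_eq_of_card_lt
      (fun i : Fin R => (α (X + i), β (Y i), (⟨r i * W / l ^ n, hbucket i⟩ : Fin W)))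
      (by simp [hR])
  simp only [Prod.mk.injEq, Fin.mk.injEq] at hij
  obtain ⟨i, j, hi, hj, hlt, h1, h2, h3⟩ : ∃ i j, i < R ∧ j < R ∧ r i < r j ∧
      α (X + i) = α (X + j) ∧ β (Y i) = β (Y j) ∧ r i * W / l ^ n = r j * W / l ^ n := by
    have hrne : r i ≠ r j := by
      rcases lt_or_gt_of_ne (Fin.val_ne_of_ne hne) with hlt | hlt
      · exact hrinj _ _ i.2 j.2 hlt
      · exact (hrinj _ _ j.2 i.2 hlt).symm
    rcases lt_or_gt_of_ne hrne with hlt | hlt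
    · exact ⟨i, j, i.2, j.2, hlt, hij.1, hij.2.1, hij.2.2⟩
    · exact ⟨j, i, j.2, i.2, hlt, hij.1.symm, hij.2.1.symm, hij.2.2.symm⟩
  have hblock : ∀ i, i < R → z ≤ (X + i) * K ^ m ∧
      (X + i) * K ^ m + K ^ m ≤ z + (R + 2) * K ^ m := by
    intro i hi
    have h1 : (i + 1) * K ^ m ≤ R * K ^ m := Nat.mul_le_mul_right _ hi
    simp only [add_mul, one_mul] at h1 ⊢
    omega
  refine ⟨N₀, (X + j) * K ^ m + r i, l ^ n, r j - r i, by omega, ?_, ?_, ?_, ?_⟩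
  · have h4 := Nat.div_mul_le_self (r i * W) (l ^ n)
    have h5 := Nat.lt_div_mul_add (a := r j * W) hln
    rw [h3] at h4
    rw [mul_comm, Nat.sub_mul]
    omega
  · have := (hblock j hj).1
    omega
  · have := (hblock j hj).2
    have := hrlt i
    rw [add_mul x 1, one_mul]
    omega
  · intro s hs
    have hi' := hblock i hi
    have hj' := hblock j hj
    have hri := hrlt i
    have hrj := hrlt j
    have e1 : a ((X + j) * K ^ m + r i + s) = a ((X + i) * K ^ m + r i + s) := by
      rw [ha, ha, add_assoc, add_assoc,
        hα.pow (by omega) m (X + i) (X + j) (r i + s) (by omega) (by omega) h1 (by omega)]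
    have e2 : b ((X + i) * K ^ m + r i + s) = b ((X + j) * K ^ m + r j + s) := by
      rw [hb, hb, ← hr i, ← hr j,
        hβ.pow (by omega) n (Y i) (Y j) s (hYpos i) (hYpos j) h2 hs]
    rw [e1, hfree _ (by omega) (by omega), e2, ← hfree _ (by omega) (by omega)]
    congr 1
    omega

/-- A local period on a long interval is a period of all large blocks below a recurrent
position. -/
lemma exists_period_of_recurrent {Ω S S' : Type*} [Finite S] [Finite S'] {K l : ℕ}
    (hK : 2 ≤ K) (hl : 2 ≤ l) (hind : MultIndep K l) {α : ℕ → S} {β : ℕ → S'} {τ : S → Ω}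
    {τ' : S' → Ω} (hα : DigitCompatible K α) (hβ : DigitCompatible l β)
    (hsub : ∀ x d, 1 ≤ x → d < K → reach K α (x * K + d) ⊆ reach K α x) {a b : ℕ → Ω}
    (ha : ∀ n, a n = τ (α n)) (hb : ∀ n, b n = τ' (β n)) (hab : Negligible {n | a n ≠ b n})
    {x : ℕ} (hx : x ∈ recurrentSet K α) :
    ∃ p t₁, 1 ≤ p ∧ ∀ t j, t₁ ≤ t → j + p < K ^ t →
      a (x * K ^ t + j) = a (x * K ^ t + j + p) := by
  have hK1 : 1 ≤ K := by omega
  have hpow : ∀ i, 0 < K ^ i := fun i => Nat.pow_pos hK1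
  obtain ⟨T, hT⟩ := exists_depth_of_consecutive hK1 hα hsub hx
  obtain ⟨M, N, H, p, hp, hWp, hN1, hN2, hper⟩ := exists_local_period hK hl hind hα hβ ha hb hab
    hx.1 (W := 2 * K ^ (T + 1)) (Nat.mul_pos (by omega) (hpow _))
  obtain ⟨t, ht1, ht2⟩ : ∃ t, p < K ^ t ∧ K ^ t ≤ K * p := by
    refine ⟨Nat.log K p + 1, Nat.lt_pow_succ_log_self (by omega) p, ?_⟩
    rw [pow_succ, mul_comm]
    exact Nat.mul_le_mul_left _ (Nat.pow_log_le_self K (by omega))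
  have hH : 2 * K ^ (t + T) ≤ H := by
    calc 2 * K ^ (t + T) = 2 * K ^ T * K ^ t := by ring
      _ ≤ 2 * K ^ T * (K * p) := Nat.mul_le_mul_left _ ht2
      _ = 2 * K ^ (T + 1) * p := by ring
      _ ≤ H := hWp
  obtain ⟨z, hz1, hz2⟩ : ∃ z, N ≤ z * K ^ (t + T) ∧ (z + 1) * K ^ (t + T) ≤ N + H := by
    refine ⟨N / K ^ (t + T) + 1, ?_, ?_⟩
    · have := Nat.lt_div_mul_add (a := N) (hpow (t + T))
      rw [add_mul]; omega
    · have := Nat.div_mul_le_self N (K ^ (t + T))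
      simp only [add_mul]; omega
  have htM : t + T ≤ M := by
    refine (Nat.pow_le_pow_iff_right (by omega : 1 < K)).1 ?_
    rw [add_mul, one_mul] at hN2
    have := hpow (t + T)
    omega
  obtain ⟨i', rfl⟩ := Nat.exists_eq_add_of_le' htM
  obtain ⟨j', hj', hzj⟩ : ∃ j', j' < K ^ i' ∧ z = x * K ^ i' + j' := by
    have h1 : x * K ^ i' ≤ z := by
      refine Nat.le_of_mul_le_mul_right ?_ (hpow (t + T))
      rw [mul_assoc, ← pow_add]
      exact hN1.trans hz1
    have h2 : z + 1 ≤ (x + 1) * K ^ i' := by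
      refine Nat.le_of_mul_le_mul_right ?_ (hpow (t + T))
      rw [mul_assoc, ← pow_add]
      exact hz2.trans hN2
    refine ⟨z - x * K ^ i', ?_, by omega⟩
    rw [add_mul, one_mul] at h2
    omega
  refine ⟨p, t + 1, hp, fun t' j ht' hj => ?_⟩
  obtain ⟨i, rfl⟩ := Nat.exists_eq_add_of_le' (show t ≤ t' by omega)
  have hKi : 2 ≤ K ^ i := by
    calc 2 ≤ K ^ 1 := by simpa using hK
      _ ≤ K ^ i := Nat.pow_le_pow_right hK1 (by omega)
  obtain ⟨y, hy, hy1, hy2⟩ : ∃ y, y + 1 < K ^ i ∧ y * K ^ t ≤ j ∧ j + p < (y + 2) * K ^ t := by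
    have h1 := Nat.div_mul_le_self j (K ^ t)
    have h2 := Nat.lt_div_mul_add (a := j) (hpow t)
    have h3 : j / K ^ t < K ^ i := by
      rw [Nat.div_lt_iff_lt_mul (hpow t), ← pow_add]
      omega
    by_cases hlast : j / K ^ t + 1 < K ^ i
    · refine ⟨j / K ^ t, hlast, h1, ?_⟩
      rw [add_mul]; omega
    · refine ⟨K ^ i - 2, by omega, ?_, ?_⟩
      · refine le_trans (Nat.mul_le_mul_right _ ?_) h1
        omega
      · rwa [Nat.sub_add_cancel hKi, ← pow_add]
  obtain ⟨c, hc, hc1, hc2⟩ := hT i y hy i' j' hj'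
  rw [← hzj] at hc1 hc2
  have hzpos : 1 ≤ z * K ^ T + c := by
    rw [hzj]
    exact le_add_right (Nat.mul_pos (Nat.add_pos_left (Nat.mul_pos hx.1 (hpow _)) _) (hpow _))
  have hxpos : 1 ≤ x * K ^ i + y := le_add_right (Nat.mul_pos hx.1 (hpow _))
  have hcopy : ∀ s, s < 2 * K ^ t →
      a ((x * K ^ i + y) * K ^ t + s) = a ((z * K ^ T + c) * K ^ t + s) := by
    intro s hs
    rw [ha, ha]
    by_cases hst : s < K ^ t
    · rw [hα.pow hK1 t _ _ s hzpos hxpos hc1 hst]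
    · obtain ⟨s, rfl⟩ := Nat.exists_eq_add_of_le (not_lt.1 hst)
      have := hα.pow hK1 t _ _ s (by omega) (by omega) hc2 (by omega)
      rw [show (x * K ^ i + y) * K ^ t + (K ^ t + s) = (x * K ^ i + (y + 1)) * K ^ t + s by ring,
        show (z * K ^ T + c) * K ^ t + (K ^ t + s) = (z * K ^ T + (c + 1)) * K ^ t + s by ring,
        this]
  obtain ⟨s, rfl⟩ := Nat.exists_eq_add_of_le hy1
  have hs : s + p < 2 * K ^ t := by rw [add_mul] at hy2; omega
  have hinside : N ≤ (z * K ^ T + c) * K ^ t + s ∧ (z * K ^ T + c) * K ^ t + s < N + H := by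
    have h1 : (c + 2) * K ^ t ≤ K ^ T * K ^ t := Nat.mul_le_mul_right _ hc
    rw [pow_add, mul_comm (K ^ t)] at hz1 hz2
    have h2 : (z * K ^ T + c) * K ^ t = z * (K ^ T * K ^ t) + c * K ^ t := by ring
    rw [add_mul] at h1 hz2
    rw [one_mul] at hz2
    omega
  have hfin := hper ((z * K ^ T + c) * K ^ t + s - N) (by omega)
  rw [Nat.add_sub_cancel' hinside.1] at hfin
  have e1 : x * K ^ (i + t) + (y * K ^ t + s) = (x * K ^ i + y) * K ^ t + s := by ring
  rw [e1, add_assoc _ s p, hcopy _ (by omega), hcopy _ hs, hfin, add_assoc]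

/-! ### Density of quotients of powers -/

lemma exists_nat_mul_sub_mem_Ioo {u v : ℝ} (hu : 0 < u) (hv : 0 < v)
    (hne : ∀ i j : ℕ, (i : ℝ) * u = j * v → i = 0) {A B : ℝ} (hAB : A < B) (N : ℕ) :
    ∃ i j : ℕ, N ≤ i ∧ N ≤ j ∧ A < i * u - j * v ∧ i * u - j * v < B := by
  obtain ⟨n, hn⟩ := exists_nat_gt (v / (B - A))
  have hBA : 0 < B - A := sub_pos.2 hAB
  have hn0 : 0 < n := by
    have : (0 : ℝ) < n := lt_trans (by positivity) hn
    exact_mod_cast this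
  obtain ⟨i, hi, -, hround⟩ := Real.exists_nat_abs_mul_sub_round_le (u / v) hn0
  have hnonneg : 0 ≤ round ((i : ℝ) * (u / v)) := by
    rw [round_eq]
    exact Int.floor_nonneg.2 (by positivity)
  obtain ⟨j, hj⟩ := Int.eq_ofNat_of_zero_le hnonneg
  rw [hj] at hround
  have hsmall : |(i : ℝ) * u - j * v| < B - A := by
    have h1 : (i : ℝ) * u - j * v = (i * (u / v) - ((j : ℤ) : ℝ)) * v := by
      push_cast
      field_simp
    rw [h1, abs_mul, abs_of_pos hv]
    have h2 : v < n * (B - A) := by rwa [div_lt_iff₀ hBA] at hn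
    calc _ ≤ 1 / ((n : ℝ) + 1) * v := mul_le_mul_of_nonneg_right hround hv.le
      _ < B - A := by
        rw [div_mul_eq_mul_div, one_mul, div_lt_iff₀ (by positivity)]
        nlinarith
  have hne0 : (i : ℝ) * u - j * v ≠ 0 := fun h => by
    have := hne i j (sub_eq_zero.1 h)
    omega
  obtain ⟨δ, hδ⟩ : ∃ δ, δ = (i : ℝ) * u - j * v := ⟨_, rfl⟩
  rw [← hδ] at hsmall hne0
  rw [abs_lt] at hsmall
  rcases lt_or_gt_of_ne hne0 with hneg | hpos
  · obtain ⟨m, hm⟩ := exists_nat_gt ((B + N * v) / u)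
    rw [div_lt_iff₀ hu] at hm
    have hstart : B < ((N + m : ℕ) : ℝ) * u - N * v := by
      push_cast
      nlinarith [mul_nonneg (Nat.cast_nonneg (α := ℝ) N) hu.le]
    have hex : ∃ s : ℕ, ((N + m : ℕ) : ℝ) * u - N * v + s * δ < B := by
      obtain ⟨s, hs⟩ := exists_nat_gt ((((N + m : ℕ) : ℝ) * u - N * v - B) / (-δ))
      rw [div_lt_iff₀ (by linarith)] at hs
      exact ⟨s, by linarith⟩
    classical
    have hs := Nat.find_spec hex
    have hmin := Nat.find_min hex (m := Nat.find hex - 1)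
    generalize Nat.find hex = s at hs hmin
    have hs0 : s ≠ 0 := by
      rintro rfl
      simp only [Nat.cast_zero, zero_mul, add_zero] at hs
      linarith
    have hmin := hmin (by omega)
    rw [Nat.cast_sub (by omega), Nat.cast_one] at hmin
    refine ⟨N + m + s * i, N + s * j, by omega, by omega, ?_⟩
    have heq : ((N + m + s * i : ℕ) : ℝ) * u - ((N + s * j : ℕ) : ℝ) * v =
        ((N + m : ℕ) : ℝ) * u - N * v + s * δ := by
      rw [hδ]; push_cast; ring
    rw [heq]
    refine ⟨?_, hs⟩
    linarith
  · obtain ⟨m, hm⟩ := exists_nat_gt ((N * u - A) / v)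
    rw [div_lt_iff₀ hv] at hm
    have hstart : (N : ℝ) * u - ((N + m : ℕ) : ℝ) * v < A := by
      push_cast
      nlinarith [mul_nonneg (Nat.cast_nonneg (α := ℝ) N) hv.le]
    have hex : ∃ s : ℕ, A < (N : ℝ) * u - ((N + m : ℕ) : ℝ) * v + s * δ := by
      obtain ⟨s, hs⟩ := exists_nat_gt ((A - ((N : ℝ) * u - ((N + m : ℕ) : ℝ) * v)) / δ)
      rw [div_lt_iff₀ hpos] at hs
      exact ⟨s, by linarith⟩
    classical
    have hs := Nat.find_spec hex
    have hmin := Nat.find_min hex (m := Nat.find hex - 1)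
    generalize Nat.find hex = s at hs hmin
    have hs0 : s ≠ 0 := by
      rintro rfl
      simp only [Nat.cast_zero, zero_mul, add_zero] at hs
      linarith
    have hmin := hmin (by omega)
    rw [Nat.cast_sub (by omega), Nat.cast_one] at hmin
    refine ⟨N + s * i, N + m + s * j, by omega, by omega, ?_⟩
    have heq : ((N + s * i : ℕ) : ℝ) * u - ((N + m + s * j : ℕ) : ℝ) * v =
        (N : ℝ) * u - ((N + m : ℕ) : ℝ) * v + s * δ := by
      rw [hδ]; push_cast; ring
    rw [heq]
    refine ⟨hs, ?_⟩
    linarith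

lemma MultIndep.exists_pow_mul_between {K L : ℕ} (hK : 2 ≤ K) (hL : 2 ≤ L)
    (h : MultIndep K L) {x y : ℕ} (hx : 1 ≤ x) (hy : 1 ≤ y) (N : ℕ) :
    ∃ t u, N ≤ t ∧ N ≤ u ∧ x * K ^ t ≤ y * L ^ u ∧ 2 * (y * L ^ u) ≤ (2 * x + 1) * K ^ t := by
  have hK' : (1 : ℝ) < K := by exact_mod_cast (by omega : 1 < K)
  have hL' : (1 : ℝ) < L := by exact_mod_cast (by omega : 1 < L)
  have hx' : (0 : ℝ) < x := by exact_mod_cast hx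
  have hy' : (0 : ℝ) < y := by exact_mod_cast hy
  have hKpos : (0 : ℝ) < K := by linarith
  have hLpos : (0 : ℝ) < L := by linarith
  have hne : ∀ i j : ℕ, (i : ℝ) * Real.log L = j * Real.log K → i = 0 := by
    intro i j hij
    rw [← Real.log_pow, ← Real.log_pow] at hij
    have h1 : (L : ℝ) ^ i = (K : ℝ) ^ j :=
      Real.log_injOn_pos (Set.mem_Ioi.2 (by positivity)) (Set.mem_Ioi.2 (by positivity)) hij
    exact (h j i (by exact_mod_cast h1.symm)).2
  have hAB : Real.log x - Real.log y < Real.log (x + 1 / 2) - Real.log y := by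
    have := Real.log_lt_log hx' (by linarith : (x : ℝ) < x + 1 / 2)
    linarith
  obtain ⟨u, t, hu, ht, h1, h2⟩ :=
    exists_nat_mul_sub_mem_Ioo (Real.log_pos hL') (Real.log_pos hK') hne hAB N
  refine ⟨t, u, ht, hu, ?_, ?_⟩
  · have h3 : Real.log (x * (K : ℝ) ^ t) < Real.log (y * (L : ℝ) ^ u) := by
      rw [Real.log_mul (by positivity) (by positivity),
        Real.log_mul (by positivity) (by positivity), Real.log_pow, Real.log_pow]
      linarith
    have h4 := (Real.log_lt_log_iff (by positivity) (by positivity)).1 h3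
    exact_mod_cast h4.le
  · have h3 : Real.log (y * (L : ℝ) ^ u) < Real.log ((x + 1 / 2) * (K : ℝ) ^ t) := by
      rw [Real.log_mul (by positivity) (by positivity),
        Real.log_mul (by positivity) (by positivity), Real.log_pow, Real.log_pow]
      linarith
    have h4 := (Real.log_lt_log_iff (by positivity) (by positivity)).1 h3
    have h5 : (2 : ℝ) * (y * (L : ℝ) ^ u) ≤ (2 * x + 1) * (K : ℝ) ^ t := by linarith
    exact_mod_cast h5

/-! ### Residue classes inside blocks -/

lemma eq_add_mul_of_period {Ω : Type*} {f : ℕ → Ω} {B p : ℕ}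
    (h : ∀ j, j + p < B → f j = f (j + p)) (c j : ℕ) (hj : j + c * p < B) :
    f j = f (j + c * p) := by
  induction c with
  | zero => simp
  | succ c ih =>
    rw [add_mul, one_mul] at hj ⊢
    rw [ih (by omega), ← add_assoc]
    exact h _ (by omega)

/-- Outside a negligible set, the values of an automatic sequence which agrees almost
everywhere with a sequence automatic in a multiplicatively independent base depend only on a
suitable prefix and on the residue of the argument. -/
lemma exists_block_structure {Ω : Type*} {k l : ℕ} (hk : 2 ≤ k) (hl : 2 ≤ l)
    (hind : MultIndep k l) {a b : ℕ → Ω} (ha : IsAutomatic k a) (hb : IsAutomatic l b)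
    (hab : Negligible {n | a n ≠ b n}) :
    ∃ (e q t₀ : ℕ) (G : Set ℕ), 1 ≤ e ∧ 1 ≤ q ∧ Negligible Gᶜ ∧ (∀ x ∈ G, 1 ≤ x) ∧
      ∀ x ∈ G, ∀ t t' j j', t₀ ≤ t → t₀ ≤ t' → j < (k ^ e) ^ t → j' < (k ^ e) ^ t' →
        x * (k ^ e) ^ t + j ≡ x * (k ^ e) ^ t' + j' [MOD q] →
        a (x * (k ^ e) ^ t + j) = a (x * (k ^ e) ^ t' + j') := by
  obtain ⟨S, _, α, τ, ha, hα⟩ := ha.exists_digitCompatible hk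
  obtain ⟨S', _, β, τ', hb, hβ⟩ := hb.exists_digitCompatible hl
  obtain ⟨e₀, he₀, hsub⟩ := hα.exists_pow_reach_subset (by omega : 1 ≤ k)
  replace hα := hα.pow (by omega) e₀
  replace hind : MultIndep (k ^ e₀) l := by simpa using hind.pow he₀ le_rfl
  have hK₀ : 2 ≤ k ^ e₀ := by
    calc 2 ≤ k ^ 1 := by simpa using hk
      _ ≤ k ^ e₀ := Nat.pow_le_pow_right (by omega) he₀
  simp only [← pow_mul (a := k)]
  obtain ⟨K₀, hK₀eq⟩ : ∃ K₀, K₀ = k ^ e₀ := ⟨_, rfl⟩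
  rw [← hK₀eq] at hα hind hK₀ hsub
  have hK₁ : 1 ≤ K₀ := by omega
  classical
  cases nonempty_fintype S
  have hperiod : ∀ s : S, ∃ p t₁, 1 ≤ p ∧ ∀ x ∈ recurrentSet K₀ α, α x = s →
      ∀ t j, t₁ ≤ t → j + p < K₀ ^ t → a (x * K₀ ^ t + j) = a (x * K₀ ^ t + (j + p)) := by
    intro s
    by_cases hs : ∃ x ∈ recurrentSet K₀ α, α x = s
    · obtain ⟨x, hx, rfl⟩ := hs
      obtain ⟨p, t₁, hp, hper⟩ :=
        exists_period_of_recurrent hK₀ hl hind hα hβ hsub ha hb hab hx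
      refine ⟨p, t₁, hp, fun y hy hyx t j ht hj => ?_⟩
      have hcopy : ∀ i, i < K₀ ^ t → a (y * K₀ ^ t + i) = a (x * K₀ ^ t + i) := by
        intro i hi
        rw [ha, ha, hα.pow hK₁ t y x i hy.1 hx.1 hyx hi]
      rw [hcopy _ (by omega), hcopy _ hj, hper t j ht hj, add_assoc]
    · exact ⟨1, 0, le_rfl, fun x hx hxs => absurd ⟨x, hx, hxs⟩ hs⟩
  choose p t₁ hp hper using hperiod
  obtain ⟨q, hq⟩ : ∃ q, q = ∏ s, p s := ⟨_, rfl⟩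
  have hqpos : 1 ≤ q := by
    rw [hq]
    exact Nat.succ_le_of_lt (Finset.prod_pos fun s _ => hp s)
  have hmod : ∀ x ∈ recurrentSet K₀ α, ∀ t j, Finset.univ.sup t₁ ≤ t → j < K₀ ^ t →
      a (x * K₀ ^ t + j) = a (x * K₀ ^ t + j % q) := by
    intro x hx t j ht hj
    have ht' : t₁ (α x) ≤ t := (Finset.le_sup (Finset.mem_univ _)).trans ht
    obtain ⟨c, hc⟩ : p (α x) ∣ q := hq ▸ Finset.dvd_prod_of_mem p (Finset.mem_univ _)
    have heq : j = j % q + j / q * c * p (α x) := by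
      conv_lhs => rw [← Nat.mod_add_div j q]
      rw [hc]; ring
    have := eq_add_mul_of_period (f := fun i => a (x * K₀ ^ t + i)) (B := K₀ ^ t)
      (fun i hi => hper (α x) x hx rfl t i ht' hi) (j / q * c) (j % q) (by rwa [← heq])
    rw [← heq] at this
    exact this.symm
  have : NeZero q := ⟨by omega⟩
  let σ : Function.End S := fun s =>
    if h : ∃ x, 1 ≤ x ∧ α x = s then α (h.choose * K₀) else s
  have hσ : ∀ n x, 1 ≤ x → (σ ^ n) (α x) = α (x * K₀ ^ n) := by
    intro n
    induction n with
    | zero =>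
      intro x _
      change α x = _
      simp
    | succ n ih =>
      intro x hx
      rw [pow_succ']
      change σ ((σ ^ n) (α x)) = _
      rw [ih x hx]
      have hex : ∃ y, 1 ≤ y ∧ α y = α (x * K₀ ^ n) :=
        ⟨_, Nat.mul_pos hx (Nat.pow_pos hK₁), rfl⟩
      have hval : σ (α (x * K₀ ^ n)) = α (hex.choose * K₀) := dif_pos hex
      have := hα _ _ 0 hex.choose_spec.1 (Nat.mul_pos hx (Nat.pow_pos hK₁))
        hex.choose_spec.2 hK₁
      rw [hval, pow_succ, ← mul_assoc]
      simpa using this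
  have : Finite (Function.End S) := inferInstanceAs (Finite (S → S))
  obtain ⟨e, he, hidem⟩ := exists_idempotent_pow ((σ, (K₀ : ZMod q)) : Function.End S × ZMod q)
  obtain ⟨hidem₁, hidem₂⟩ := Prod.ext_iff.1 hidem
  simp only [Prod.pow_mk] at hidem₁ hidem₂
  refine ⟨e₀ * e, q, max (Finset.univ.sup t₁) q + 1, recurrentSet K₀ α,
    Nat.mul_pos he₀ he, hqpos, negligible_compl_recurrentSet hK₁ hα hsub, fun x hx => hx.1, ?_⟩
  have hpowK : ∀ t, k ^ (e₀ * e * t) = K₀ ^ (e * t) := by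
    intro t
    rw [hK₀eq, ← pow_mul, mul_assoc]
  simp only [hpowK]
  have hresidue : ∀ x t, 1 ≤ t → x * K₀ ^ (e * t) ≡ x * K₀ ^ e [MOD q] := by
    intro x t ht
    refine Nat.ModEq.mul_left _ ?_
    rw [← ZMod.natCast_eq_natCast_iff]
    push_cast
    induction t, ht using Nat.le_induction with
    | base => simp
    | succ t _ ih => rw [mul_add, mul_one, pow_add, ih, ← pow_add, hidem₂]
  intro x hx
  have hstep : ∀ t j, max (Finset.univ.sup t₁) q + 1 ≤ t → j < q →
      a (x * K₀ ^ (e * (t + 1)) + j) = a (x * K₀ ^ (e * t) + j) := by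
    intro t j ht hj
    obtain ⟨s, rfl⟩ := Nat.exists_eq_add_of_le' (show 1 ≤ t by omega)
    have h1 : α (x * K₀ ^ (e + e)) = α (x * K₀ ^ e) := by
      rw [← hσ _ x hx.1, ← hσ _ x hx.1, hidem₁]
    have hjs : j < K₀ ^ (e * s) := by
      calc j < q := hj
        _ ≤ e * s := le_trans (by omega) (Nat.le_mul_of_pos_left s he)
        _ ≤ K₀ ^ (e * s) := (Nat.lt_pow_self (by omega)).le
    have h2 := hα.pow hK₁ (e * s) _ _ j (Nat.mul_pos hx.1 (Nat.pow_pos hK₁))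
      (Nat.mul_pos hx.1 (Nat.pow_pos hK₁)) h1 hjs
    rw [ha, ha, show x * K₀ ^ (e * (s + 1 + 1)) = x * K₀ ^ (e + e) * K₀ ^ (e * s) by ring,
      show x * K₀ ^ (e * (s + 1)) = x * K₀ ^ e * K₀ ^ (e * s) by ring, h2]
  have hbase : ∀ t j, max (Finset.univ.sup t₁) q + 1 ≤ t → j < q →
      a (x * K₀ ^ (e * t) + j) =
        a (x * K₀ ^ (e * (max (Finset.univ.sup t₁) q + 1)) + j) := by
    intro t j ht hj
    induction t, ht using Nat.le_induction with
    | base => rfl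
    | succ t ht ih => rw [hstep t j ht hj, ih]
  intro t t' j j' ht ht' hj hj' hcong
  have hjj : j % q = j' % q := by
    refine Nat.ModEq.add_left_cancel ?_ hcong
    exact (hresidue x t (by omega)).trans (hresidue x t' (by omega)).symm
  have hlarge : ∀ t, max (Finset.univ.sup t₁) q + 1 ≤ t → Finset.univ.sup t₁ ≤ e * t :=
    fun t ht => le_trans (by omega) (Nat.le_mul_of_pos_left t he)
  rw [hmod x hx _ j (hlarge t ht) hj, hmod x hx _ j' (hlarge t' ht') hj',
    hbase t _ ht (Nat.mod_lt _ hqpos), hbase t' _ ht' (Nat.mod_lt _ hqpos), hjj]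

/-- Large blocks below `x` and `y` in multiplicatively independent bases meet, off any given
negligible set, in each residue class. -/
lemma exists_common_position {K L : ℕ} (hK : 2 ≤ K) (hL : 2 ≤ L) (hind : MultIndep K L)
    {A : Set ℕ} (hA : Negligible A) {x y Q : ℕ} (hx : 1 ≤ x) (hy : 1 ≤ y) (hQ : 1 ≤ Q)
    (N r : ℕ) :
    ∃ t u i j, N ≤ t ∧ N ≤ u ∧ i < K ^ t ∧ j < L ^ u ∧ x * K ^ t + i = y * L ^ u + j ∧
      x * K ^ t + i ≡ r [MOD Q] ∧ x * K ^ t + i ∉ A := by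
  obtain ⟨N₀, hN₀⟩ := hA.exists_free_window hQ ((x + 1) * (4 * y))
  obtain ⟨t, u, ht, hu, h1, h2⟩ :=
    hind.exists_pow_mul_between hK hL hx hy (max N (2 * y * (N₀ + 1)))
  obtain ⟨H, hH⟩ : ∃ H, H = K ^ t / (2 * y) := ⟨_, rfl⟩
  have hKt : 2 * y * (N₀ + 1) ≤ K ^ t :=
    le_trans (by omega) (Nat.lt_pow_self (by omega) : t < K ^ t).le
  have hHN : N₀ + 1 ≤ H := by
    rw [hH, Nat.le_div_iff_mul_le (by omega)]
    linarith
  have hH1 : H * (2 * y) ≤ K ^ t := hH ▸ Nat.div_mul_le_self _ _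
  have hH2 : K ^ t < H * (2 * y) + 2 * y := by
    rw [hH]; exact Nat.lt_div_mul_add (by omega)
  have hstart : y * L ^ u ≤ (x + 1) * (4 * y) * H := by
    have h3 : K ^ t ≤ 4 * y * H := by nlinarith
    have h4 : y * L ^ u ≤ (x + 1) * K ^ t := by nlinarith
    calc y * L ^ u ≤ (x + 1) * K ^ t := h4
      _ ≤ (x + 1) * (4 * y * H) := Nat.mul_le_mul_left _ h3
      _ = _ := by ring
  obtain ⟨z, hz1, hz2, hz3⟩ := hN₀ H (y * L ^ u) (by omega) hstart
  have hHK : 2 * H ≤ K ^ t := by nlinarith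
  have hHL : H ≤ L ^ u := by
    refine Nat.le_of_mul_le_mul_left ?_ hy
    nlinarith
  obtain ⟨s, hs, hsr⟩ : ∃ s < Q, z + s ≡ r [MOD Q] := by
    refine ⟨(r + (Q - 1) * z) % Q, Nat.mod_lt _ hQ, ?_⟩
    calc z + (r + (Q - 1) * z) % Q ≡ z + (r + (Q - 1) * z) [MOD Q] :=
          (Nat.mod_modEq _ _).add_left _
      _ = r + Q * z := by
          obtain ⟨Q, rfl⟩ := Nat.exists_eq_add_of_le' hQ
          rw [Nat.add_sub_cancel]; ring
      _ ≡ r [MOD Q] := by simp [Nat.ModEq]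
  have hle : x * K ^ t ≤ z + s := by omega
  refine ⟨t, u, z + s - x * K ^ t, z + s - y * L ^ u, by omega, by omega, ?_, by omega,
    by omega, ?_, ?_⟩
  · rw [add_mul, one_mul, mul_assoc] at h2
    omega
  · rwa [Nat.add_sub_cancel' hle]
  · rw [Nat.add_sub_cancel' hle]
    exact hz3 s hs

lemma Negligible.exists_notMem {A : Set ℕ} (hA : Negligible A) : ∃ n, n ∉ A := by
  obtain ⟨N, hN⟩ := hA.exists_free_window le_rfl 0
  obtain ⟨z, -, -, hz⟩ := hN N 0 le_rfl (by simp)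
  exact ⟨z + 0, hz 0 (by omega)⟩

/-- **Main Theorem** (density version of Cobham's theorem). If `k, l ≥ 2` are
multiplicatively independent, `a` is `k`-automatic, `b` is `l`-automatic, and `a`
and `b` coincide almost everywhere, then there is a periodic sequence `c` with
which both `a` and `b` coincide almost everywhere. -/
theorem main_theorem {Ω : Type} [Fintype Ω] (k l : ℕ) (hk : 2 ≤ k) (hl : 2 ≤ l)
    (hind : MultIndep k l) (a b : ℕ → Ω)
    (ha : IsAutomatic k a) (hb : IsAutomatic l b)
    (hae : upperDensity {n : ℕ | a n ≠ b n} = 0) :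
    ∃ c : ℕ → Ω, (∃ q : ℕ, 1 ≤ q ∧ ∀ n : ℕ, c (n + q) = c n) ∧
      upperDensity {n : ℕ | a n ≠ c n} = 0 ∧
      upperDensity {n : ℕ | b n ≠ c n} = 0 := by
  have hab := negligible_of_upperDensity_eq_zero hae
  have hba : Negligible {n | b n ≠ a n} := by simpa only [ne_comm] using hab
  obtain ⟨e, q, t₀, G, he, hq, hG, hGpos, hGa⟩ := exists_block_structure hk hl hind ha hb hab
  obtain ⟨e', q', t₀', G', he', hq', hG', hGpos', hGb⟩ :=
    exists_block_structure hl hk hind.symm hb ha hba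
  have hind' := hind.pow he he'
  have htwo : ∀ {m f : ℕ}, 2 ≤ m → 1 ≤ f → 2 ≤ m ^ f := fun hm hf =>
    hm.trans (Nat.le_self_pow (by omega) _)
  have hK := htwo hk he
  have hL := htwo hl he'
  generalize k ^ e = K at *
  generalize l ^ e' = L at *
  obtain ⟨y, hy⟩ := hG'.exists_notMem
  rw [Set.notMem_compl_iff] at hy
  have hQ : 1 ≤ q * q' := Nat.mul_pos hq hq'
  obtain ⟨u₀, hu₀⟩ : ∃ u₀, u₀ = t₀' + q * q' := ⟨_, rfl⟩
  have hQL : q * q' ≤ L ^ u₀ := le_trans (by omega) (Nat.lt_pow_self (by omega) : u₀ < L ^ u₀).le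
  let c : ℕ → Ω := fun n => b (y * L ^ u₀ + (n + (q * q' - 1) * (y * L ^ u₀)) % (q * q'))
  have hc : ∀ n, y * L ^ u₀ + (n + (q * q' - 1) * (y * L ^ u₀)) % (q * q') ≡ n [MOD q * q'] := by
    intro n
    generalize y * L ^ u₀ = v
    calc _ ≡ v + (n + (q * q' - 1) * v) [MOD q * q'] := (Nat.mod_modEq _ _).add_left _
      _ = n + q * q' * v := by
          obtain ⟨Q, hQ'⟩ := Nat.exists_eq_add_of_le' hQ
          rw [hQ', Nat.add_sub_cancel]; ring
      _ ≡ n [MOD q * q'] := by simp [Nat.ModEq]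
  have hac : Negligible {n | a n ≠ c n} := by
    refine (hG.preimage_div (M := K ^ t₀) (Nat.pow_pos (by omega))).mono fun n hn hx => hn ?_
    have hmod := Nat.mod_lt n (Nat.pow_pos (by omega) : 0 < K ^ t₀)
    have hn' : n / K ^ t₀ * K ^ t₀ + n % K ^ t₀ = n := Nat.div_add_mod' _ _
    obtain ⟨t, u, i, j, ht, hu, hi, hj, heq, hcong, hnot⟩ := exists_common_position hK hL hind' hab
      (hGpos _ hx) (hGpos' _ hy) hQ (t₀ + t₀') n
    have h1 : a n = a (n / K ^ t₀ * K ^ t + i) := by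
      have := hGa _ hx t₀ t (n % K ^ t₀) i le_rfl (by omega) hmod hi
        (by rw [hn']; exact (Nat.ModEq.of_mul_right _ hcong).symm)
      rwa [hn'] at this
    have h2 : b (y * L ^ u + j) = c n := by
      refine hGb _ hy u u₀ j _ (by omega) (by omega) hj
        (lt_of_lt_of_le (Nat.mod_lt _ hQ) hQL) ?_
      rw [← heq]
      exact Nat.ModEq.of_mul_left _ (hcong.trans (hc n).symm)
    rw [h1, ← h2, ← heq]
    simpa using hnot
  refine ⟨c, ⟨q * q', hQ, fun n => ?_⟩, hac.upperDensity_eq_zero, ?_⟩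
  · simp only [c]
    rw [add_right_comm, Nat.add_mod_right]
  · refine Negligible.upperDensity_eq_zero ((hba.union hac).mono fun n hn => ?_)
    by_contra hcon
    simp only [Set.mem_union, Set.mem_ofPred_eq, not_or, not_not] at hcon hn
    exact hn (hcon.1.trans hcon.2)
end

section
/- Let 𝒜 = (S, Σ_k, δ, s₀, Ω, τ) be a k-automaton in which every state is accessible. Then the set of n ∈ ℕ such that the state δ*(s₀, (n)_k) reached after reading the base-k representation of n does not lie in any strongly connected component of 𝒜 has upper density 0. -/
open Filter

theorem run_append {S : Type*} {k : ℕ} (δ : S → Fin k → S) (s : S) (v w : List (Fin k)) :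
    run δ s (v ++ w) = run δ (run δ s v) w :=
  List.foldl_append

/-- Reading one more digit extends the base-`k` representation on the right. -/
theorem kRepr_eq_append {k n : ℕ} (hk : 1 < k) (hn : 0 < n) :
    kRepr k n = kRepr k (n / k) ++ [⟨n % k, Nat.mod_lt n (by omega)⟩] := by
  simp only [kRepr, dif_pos hk]
  simp [Nat.digits_def' hk hn, List.pmap_append]

theorem run_kRepr {S : Type*} {k n : ℕ} (hk : 1 < k) (hn : 0 < n) (δ : S → Fin k → S) (s : S) :
    run δ s (kRepr k n) = δ (run δ s (kRepr k (n / k))) ⟨n % k, Nat.mod_lt n (by omega)⟩ := by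
  rw [kRepr_eq_append hk hn, run_append]
  rfl

/-- Appending a word `w` to the representation of `n > 0` gives the representation of some
`k ^ |w| * n + r`. -/
theorem exists_run_kRepr_eq_run {S : Type*} {k n : ℕ} (hk : 1 < k) (hn : 0 < n)
    (δ : S → Fin k → S) (s : S) (w : List (Fin k)) :
    ∃ r < k ^ w.length,
      run δ s (kRepr k (k ^ w.length * n + r)) = run δ (run δ s (kRepr k n)) w := by
  induction w using List.reverseRecOn with
  | nil => exact ⟨0, by simp, by simp [run]⟩
  | append_singleton w d ih =>
    obtain ⟨r, hr, h⟩ := ih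
    have hkey : k ^ (w ++ [d]).length * n + (k * r + d) = d + k * (k ^ w.length * n + r) := by
      simp only [List.length_append, List.length_singleton, pow_succ]
      ring
    refine ⟨k * r + d, ?_, ?_⟩
    · have := d.isLt
      simp only [List.length_append, List.length_singleton, pow_succ]
      nlinarith
    · have hpos : 0 < d + k * (k ^ w.length * n + r) := by positivity
      have hdiv : (d + k * (k ^ w.length * n + r)) / k = k ^ w.length * n + r := by
        rw [Nat.add_mul_div_left _ _ (by omega), Nat.div_eq_of_lt d.isLt, zero_add]
      have hmod : (d + k * (k ^ w.length * n + r)) % k = d := by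
        rw [Nat.add_mul_mod_self_left, Nat.mod_eq_of_lt d.isLt]
      rw [hkey, run_kRepr hk hpos, run_append, ← h]
      simp only [hdiv, hmod]
      rfl

/-- A set of states closed under transitions is never left when more digits are read. -/
theorem run_kRepr_mem_of_div_pow {S : Type*} {k : ℕ} (hk : 1 < k) (δ : S → Fin k → S) (s : S)
    {G : Set S} (hG : ∀ t ∈ G, ∀ u, δ t u ∈ G) (L : ℕ) :
    ∀ n, 0 < n → run δ s (kRepr k (n / k ^ L)) ∈ G → run δ s (kRepr k n) ∈ G := by
  induction L with
  | zero => simp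
  | succ L ih =>
    intro n hn h
    rw [run_kRepr hk hn]
    refine hG _ ?_ _
    rw [pow_succ', ← Nat.div_div_eq_div_mul] at h
    rcases Nat.eq_zero_or_pos (n / k) with h0 | h0
    · simpa [h0] using h
    · exact ih _ h0 h

theorem run_mem_of_closed {S : Type*} {k : ℕ} {δ : S → Fin k → S} {G : Set S}
    (hG : ∀ t ∈ G, ∀ u, δ t u ∈ G) (w : List (Fin k)) : ∀ s ∈ G, run δ s w ∈ G := by
  induction w with
  | nil => exact fun s hs => hs
  | cons d w ih => exact fun s hs => ih _ (hG s hs d)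

/-- In a finite automaton, every state leads to some strongly connected component. -/
theorem exists_run_mem_isSCC {S : Type*} [Finite S] {k : ℕ} (δ : S → Fin k → S) (s : S) :
    ∃ w : List (Fin k), ∃ C : Set S, IsSCC δ C ∧ run δ s w ∈ C := by
  let reach : S → Set S := fun t => Set.range (run δ t)
  have hself : ∀ t, t ∈ reach t := fun t => ⟨[], rfl⟩
  have htrans : ∀ t, ∀ u ∈ reach t, reach u ⊆ reach t := by
    rintro t _ ⟨v, rfl⟩ _ ⟨w, rfl⟩
    exact ⟨v ++ w, run_append δ t v w⟩
  obtain ⟨_, ⟨w, rfl⟩, hmin⟩ := (reach s).toFinite.exists_minimalFor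
    (fun t => (reach t).ncard) (reach s) ⟨s, hself s⟩
  set t := run δ s w
  refine ⟨w, reach t, ⟨⟨t, hself t⟩, ?_, ?_⟩, hself t⟩
  · rintro _ ⟨v, rfl⟩ d
    exact ⟨v ++ [d], run_append δ t v [d]⟩
  · intro u hu u' hu'
    have hsub := htrans t u hu
    have hle := hmin (htrans s t ⟨w, rfl⟩ hu) (Set.ncard_le_ncard hsub)
    exact (Set.eq_of_subset_of_ncard_le hsub hle).ge hu'

/-- There is a common length `L` such that every state is sent into a strongly connected
component by a word of length `L`. -/
theorem exists_length_run_mem_isSCC {S : Type*} [Finite S] {k : ℕ} (hk : 0 < k)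
    (δ : S → Fin k → S) :
    ∃ L : ℕ, ∀ s, ∃ w : List (Fin k), w.length = L ∧ ∃ C : Set S, IsSCC δ C ∧ run δ s w ∈ C := by
  choose w C hC hw using exists_run_mem_isSCC δ
  obtain ⟨L, hL⟩ := (Set.finite_range fun s => (w s).length).bddAbove
  refine ⟨L, fun s => ⟨w s ++ List.replicate (L - (w s).length) ⟨0, hk⟩, ?_, C s, hC s, ?_⟩⟩
  · have : (w s).length ≤ L := hL ⟨s, rfl⟩
    simp only [List.length_append, List.length_replicate]
    omega
  · rw [run_append]
    exact run_mem_of_closed (hC s).2.1 _ _ (hw s)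

open Classical in
/-- If every block `[K n, K n + K)` with `n > 0` meets the complement of `B`, and is disjoint
from `B` when `n ∉ B`, then passing from `N` to `K N` multiplies the number of elements of `B`
by at most `K - 1`, up to an additive constant. -/
theorem card_filter_range_mul_le {B : Set ℕ} {K : ℕ} (hK : 0 < K)
    (hclosed : ∀ n, K ≤ n → n ∈ B → n / K ∈ B) (hesc : ∀ n, 0 < n → ∃ r < K, K * n + r ∉ B)
    (N : ℕ) :
    ((Finset.range (K * N)).filter (· ∈ B)).card
      ≤ (K - 1) * ((Finset.range N).filter (· ∈ B)).card + K := by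
  set s := (Finset.range (K * N)).filter fun n => n ∈ B ∧ K ≤ n with hs
  have hcover : (Finset.range (K * N)).filter (· ∈ B) ⊆ s ∪ Finset.range K := by
    intro n hn
    simp only [hs, Finset.mem_union, Finset.mem_filter, Finset.mem_range] at hn ⊢
    by_cases h : K ≤ n
    · exact Or.inl ⟨hn.1, hn.2, h⟩
    · exact Or.inr (by omega)
  have himage : s.image (· / K) ⊆ (Finset.range N).filter (· ∈ B) := by
    intro a ha
    obtain ⟨n, hn, rfl⟩ := Finset.mem_image.1 ha
    simp only [hs, Finset.mem_filter, Finset.mem_range] at hn ⊢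
    exact ⟨Nat.div_lt_of_lt_mul hn.1, hclosed n hn.2.2 hn.2.1⟩
  have hfibre : ∀ a ∈ s.image (· / K), (s.filter fun n => n / K = a).card ≤ K - 1 := by
    intro a ha
    obtain ⟨n, hn, rfl⟩ := Finset.mem_image.1 ha
    simp only [hs, Finset.mem_filter, Finset.mem_range] at hn
    obtain ⟨r, hr, hrB⟩ := hesc (n / K) (Nat.div_pos hn.2.2 hK)
    have hsub : (s.filter fun m => m / K = n / K)
        ⊆ (Finset.Ico (K * (n / K)) (K * (n / K) + K)).erase (K * (n / K) + r) := by
      intro m hm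
      simp only [hs, Finset.mem_filter, Finset.mem_range] at hm
      obtain ⟨⟨-, hmB, -⟩, hdiv⟩ := hm
      have h1 := Nat.div_add_mod m K
      have h2 := Nat.mod_lt m hK
      rw [hdiv] at h1
      refine Finset.mem_erase.2 ⟨fun h => hrB (h ▸ hmB), Finset.mem_Ico.2 ⟨by omega, by omega⟩⟩
    refine (Finset.card_le_card hsub).trans ?_
    rw [Finset.card_erase_of_mem (Finset.mem_Ico.2 ⟨by omega, by omega⟩), Nat.card_Ico]
    omega
  calc _ ≤ (s ∪ Finset.range K).card := Finset.card_le_card hcover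
    _ ≤ s.card + K := by simpa using Finset.card_union_le s (Finset.range K)
    _ ≤ (K - 1) * (s.image (· / K)).card + K := by
      gcongr
      exact Finset.card_le_mul_card_image s (K - 1) hfibre
    _ ≤ _ := by
      gcongr

/-- A monotone counting function which grows by a factor of at most `K - 1` when the argument
is multiplied by `K` is sublinear. -/
theorem tendsto_div_zero_of_mul_le {a : ℕ → ℕ} {K : ℕ} (hK : 0 < K) (hmono : Monotone a)
    (hle : ∀ N, a N ≤ N) (hmul : ∀ N, a (K * N) ≤ (K - 1) * a N + K) :
    Tendsto (fun n : ℕ => (a n : ℝ) / n) atTop (nhds 0) := by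
  have hK' : (0 : ℝ) < K := by exact_mod_cast hK
  have hcast : ((K - 1 : ℕ) : ℝ) = K - 1 := by
    rw [Nat.cast_sub hK, Nat.cast_one]
  have hnn : (0 : ℝ) ≤ K - 1 := hcast ▸ Nat.cast_nonneg _
  set q : ℝ := (K - 1) / K with hq
  have hq0 : 0 ≤ q := div_nonneg hnn hK'.le
  have hq1 : q < 1 := (div_lt_one hK').2 (by linarith)
  have hbound : ∀ m : ℕ, ∃ c : ℝ, ∀ N : ℕ, (a N : ℝ) ≤ q ^ m * N + c := by
    intro m
    induction m with
    | zero => exact ⟨0, fun N => by simpa using hle N⟩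
    | succ m ih =>
      obtain ⟨c, hc⟩ := ih
      refine ⟨(K - 1) * (q ^ m + c) + K, fun N => ?_⟩
      have hN : N ≤ K * (N / K + 1) := (Nat.lt_mul_div_succ N hK).le
      have h1 : (a N : ℝ) ≤ (K - 1) * a (N / K + 1) + K := by
        have := (hmono hN).trans (hmul _)
        rw [← hcast]
        exact_mod_cast this
      have h2 : ((N / K : ℕ) : ℝ) ≤ N / K := Nat.cast_div_le
      have h3 := hc (N / K + 1)
      push_cast at h3
      calc (a N : ℝ) ≤ (K - 1) * a (N / K + 1) + K := h1
        _ ≤ (K - 1) * (q ^ m * (N / K + 1) + c) + K := by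
          gcongr
          refine h3.trans ?_
          gcongr
        _ = q ^ (m + 1) * N + ((K - 1) * (q ^ m + c) + K) := by
          rw [pow_succ]
          nth_rewrite 3 [hq]
          field_simp
          ring
  rw [Metric.tendsto_atTop]
  intro ε hε
  obtain ⟨m, hm⟩ := exists_pow_lt_of_lt_one (half_pos hε) hq1
  obtain ⟨c, hc⟩ := hbound m
  obtain ⟨M, hM⟩ := exists_nat_gt (c / (ε / 2))
  refine ⟨M + 1, fun n hn => ?_⟩
  have hn0 : (0 : ℝ) < n := by exact_mod_cast (by omega : 0 < n)
  have hMn : (M : ℝ) ≤ n := by exact_mod_cast (by omega : M ≤ n)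
  rw [Real.dist_eq, sub_zero, abs_of_nonneg (by positivity), div_lt_iff₀ hn0]
  rw [div_lt_iff₀ (half_pos hε)] at hM
  nlinarith [hc n, mul_lt_mul_of_pos_right hm hn0, mul_le_mul_of_nonneg_right hMn (half_pos hε).le]

open Classical in
theorem upperDensity_eq_zero_of_blocks {B : Set ℕ} {K : ℕ} (hK : 0 < K)
    (hclosed : ∀ n, K ≤ n → n ∈ B → n / K ∈ B) (hesc : ∀ n, 0 < n → ∃ r < K, K * n + r ∉ B) :
    upperDensity B = 0 := by
  have hcard : ∀ n : ℕ,
      Nat.card ↥(B ∩ Set.Iio n) = ((Finset.range n).filter (· ∈ B)).card := by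
    intro n
    rw [Nat.card_coe_set_eq, ← Set.ncard_coe_finset]
    congr 1
    ext m
    simp [and_comm]
  simp only [upperDensity, hcard]
  refine (tendsto_div_zero_of_mul_le hK ?_ ?_ (card_filter_range_mul_le hK hclosed hesc)).limsup_eq
  · intro m n h
    exact Finset.card_le_card (Finset.filter_subset_filter _ (Finset.range_mono h))
  · intro n
    simpa using Finset.card_filter_le (Finset.range n) (· ∈ B)

/-- For an automaton in which every state is accessible, the set of `n` whose
base-`k` representation leads from the initial state to a state lying in no
strongly connected component has upper density `0`. -/
theorem density_strongly_connected_component {S Ω : Type} [Fintype S]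
    (k : ℕ) (hk : 2 ≤ k)
    (δ : S → Fin k → S) (s₀ : S) (τ : S → Ω)
    (hacc : ∀ s : S, ∃ w : List (Fin k), run δ s₀ w = s) :
    upperDensity {n : ℕ | ¬ ∃ C : Set S, IsSCC δ C ∧ run δ s₀ (kRepr k n) ∈ C} = 0 := by
  have hk1 : 1 < k := hk
  let G : Set S := {s | ∃ C : Set S, IsSCC δ C ∧ s ∈ C}
  have hclosed : ∀ t ∈ G, ∀ u, δ t u ∈ G := by
    rintro t ⟨C, hC, ht⟩ u
    exact ⟨C, hC, hC.2.1 t ht u⟩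
  obtain ⟨L, hL⟩ := exists_length_run_mem_isSCC (by omega : 0 < k) δ
  have hpos : 0 < k ^ L := by positivity
  refine upperDensity_eq_zero_of_blocks hpos ?_ ?_
  · intro n hn hbad hgood
    exact hbad (run_kRepr_mem_of_div_pow hk1 δ s₀ hclosed L n (by omega) hgood)
  · intro n hn
    obtain ⟨w, rfl, hw⟩ := hL (run δ s₀ (kRepr k n))
    obtain ⟨r, hr, h⟩ := exists_run_kRepr_eq_run hk1 hn δ s₀ w
    refine ⟨r, hr, fun hbad => hbad ?_⟩
    rw [h]
    exact hw
end

section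
/- Let a be a k-automatic sequence (k ≥ 2). Then there exists a power k′ = k^t of k (t ≥ 1) such that a is produced by a k′-automaton which is idempotent and ignores the leading 0's. -/
open Filter

/-- Every element of a finite monoid has a positive power which is idempotent. -/
theorem exists_isIdempotentElem_pow {M : Type*} [Monoid M] [Finite M] (x : M) :
    ∃ t : ℕ, 1 ≤ t ∧ IsIdempotentElem (x ^ t) := by
  obtain ⟨i, j, hij, h⟩ : ∃ i j : ℕ, i < j ∧ x ^ i = x ^ j := by
    obtain ⟨i, j, h, hne⟩ := Function.not_injective_iff.mp
      (not_injective_infinite_finite fun n : ℕ => x ^ n)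
    rcases lt_or_gt_of_ne hne with hlt | hlt
    exacts [⟨i, j, hlt, h⟩, ⟨j, i, hlt, h.symm⟩]
  obtain ⟨p, rfl⟩ := Nat.exists_eq_add_of_lt hij
  have hperiod (c m : ℕ) : x ^ (i + m + c * (p + 1)) = x ^ (i + m) := by
    induction c with
    | zero => simp
    | succ c ih =>
      rw [show i + m + (c + 1) * (p + 1) = (i + p + 1) + (m + c * (p + 1)) by ring, pow_add, ← h,
        ← pow_add, ← add_assoc, ih]
  refine ⟨(i + 1) * (p + 1), Nat.mul_pos (by omega) (by omega), ?_⟩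
  obtain ⟨m, hm⟩ := Nat.exists_eq_add_of_le (show i ≤ (i + 1) * (p + 1) by nlinarith)
  have := hperiod (i + 1) m
  rwa [← hm, pow_add] at this

theorem kRepr_zero (k : ℕ) : kRepr k 0 = [] := by
  simp [kRepr]

theorem kRepr_of_ne_zero {k n : ℕ} (hk : 1 < k) (hn : n ≠ 0) :
    kRepr k n = kRepr k (n / k) ++ [⟨n % k, Nat.mod_lt n (by omega)⟩] := by
  simp [kRepr, hk, Nat.digits_eq_cons_digits_div hk hn, List.pmap_append]

/-- A sequence of states which starts at `s₀` and follows the transitions on appended digits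
is computed by the automaton. -/
theorem run_kRepr_eq {S : Type*} {k : ℕ} (hk : 1 < k) (δ : S → Fin k → S) (s₀ : S) (F : ℕ → S)
    (hzero : F 0 = s₀) (hstep : ∀ (n : ℕ) (d : Fin k), F (k * n + d) = δ (F n) d) (n : ℕ) :
    run δ s₀ (kRepr k n) = F n := by
  induction n using Nat.strong_induction_on with
  | _ n ih =>
    rcases eq_or_ne n 0 with rfl | hn
    · simp [kRepr_zero, run, hzero]
    · have hdiv := ih (n / k) (Nat.div_lt_self (Nat.pos_of_ne_zero hn) hk)
      have hF := hstep (n / k) ⟨n % k, Nat.mod_lt n (by omega)⟩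
      rw [Nat.div_add_mod] at hF
      rw [run] at hdiv
      rw [kRepr_of_ne_zero hk hn, run, List.foldl_append, hdiv, hF]
      rfl

/-- The automaton obtained from `δ` and `s₀` by adding a new initial state `none` with a loop
labelled by `0`. -/
def ignoreLeadingZeros {S : Type*} {k : ℕ} (δ : S → Fin k → S) (s₀ : S) :
    Option S → Fin k → Option S
  | none, d => if (d : ℕ) = 0 then none else some (δ s₀ d)
  | some s, d => some (δ s d)

/-- The transition of the automaton `δ` on the last `t` base-`k` digits of `m`, padded with
leading zeros. -/
def blockStep {S : Type*} {k : ℕ} (hk : 0 < k) (δ : S → Fin k → S) : ℕ → S → ℕ → S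
  | 0, s, _ => s
  | t + 1, s, m => δ (blockStep hk δ t s (m / k)) ⟨m % k, Nat.mod_lt m hk⟩

theorem blockStep_zero_right {S : Type*} {k : ℕ} (hk : 0 < k) (δ : S → Fin k → S) (t : ℕ)
    (s : S) : blockStep hk δ t s 0 = (fun s => δ s ⟨0, hk⟩)^[t] s := by
  induction t with
  | zero => rfl
  | succ t ih => simp [blockStep, ih, Function.iterate_succ_apply']

theorem apply_pow_mul_add_eq_blockStep {S : Type*} {k : ℕ} (hk : 0 < k) (δ : S → Fin k → S)
    (F : ℕ → S) (hstep : ∀ (n : ℕ) (d : Fin k), F (k * n + d) = δ (F n) d) (t n m : ℕ)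
    (hm : m < k ^ t) : F (k ^ t * n + m) = blockStep hk δ t (F n) m := by
  induction t generalizing m with
  | zero => simp_all [blockStep]
  | succ t ih =>
    have hdiv := ih (m / k) (Nat.div_lt_of_lt_mul (by rwa [← pow_succ']))
    have hF := hstep (k ^ t * n + m / k) ⟨m % k, Nat.mod_lt m hk⟩
    rw [blockStep, ← hdiv, ← hF]
    congr 1
    rw [mul_add, add_assoc, Nat.div_add_mod, pow_succ', mul_assoc]

/-- The states reached by `ignoreLeadingZeros δ s₀` follow its transitions on every digit, a
leading `0` included. -/
theorem ignoreLeadingZeros_run_kRepr {S : Type*} {k : ℕ} (hk : 1 < k) (δ : S → Fin k → S)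
    (s₀ : S) (n : ℕ) (d : Fin k) :
    (if k * n + d = 0 then none else some (run δ s₀ (kRepr k (k * n + d)))) =
      ignoreLeadingZeros δ s₀ (if n = 0 then none else some (run δ s₀ (kRepr k n))) d := by
  by_cases h : k * n + (d : ℕ) = 0
  · have hd : (d : ℕ) = 0 := by omega
    have hn : n = 0 := by
      rcases Nat.mul_eq_zero.mp (Nat.add_eq_zero_iff.mp h).1 with h | h <;> omega
    simp [hn, hd, ignoreLeadingZeros]
  · have hrun : run δ s₀ (kRepr k (k * n + d)) = δ (run δ s₀ (kRepr k n)) d := by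
      simp [kRepr_of_ne_zero hk h, run, Nat.mul_add_div (show k > 0 by omega),
        Nat.div_eq_of_lt d.isLt, Nat.mod_eq_of_lt d.isLt]
    rw [if_neg h, hrun]
    rcases eq_or_ne n 0 with rfl | hn
    · have hd : (d : ℕ) ≠ 0 := by simpa using h
      simp [ignoreLeadingZeros, hd, kRepr_zero, run]
    · simp [ignoreLeadingZeros, hn]

/-- Every `k`-automatic sequence is produced by an idempotent `k^t`-automaton
(for some power `k^t` of `k`, `t ≥ 1`) which ignores the leading `0`'s. -/
theorem exists_idempotent_automaton {Ω : Type} (k : ℕ) (hk : 2 ≤ k)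
    (a : ℕ → Ω) (ha : IsAutomatic k a) :
    ∃ t : ℕ, 1 ≤ t ∧
      ∃ (S : Type) (_ : Fintype S) (δ : S → Fin (k ^ t) → S) (s₀ : S) (τ : S → Ω),
        (∀ z : Fin (k ^ t), (z : ℕ) = 0 → δ s₀ z = s₀) ∧
        (∀ z : Fin (k ^ t), (z : ℕ) = 0 → ∀ s : S, δ (δ s z) z = δ s z) ∧
        ∀ n : ℕ, a n = τ (run δ s₀ (kRepr (k ^ t) n)) := by
  obtain ⟨S, _, δ, s₀, τ, hτ⟩ := ha
  have hpos : 0 < k := by omega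
  let δ' := ignoreLeadingZeros δ s₀
  let f : Function.End (Option S) := fun s => δ' s ⟨0, hpos⟩
  have hpow (t : ℕ) (s : Option S) : blockStep hpos δ' t s 0 = (f ^ t) s := by
    rw [blockStep_zero_right]
    induction t with
    | zero => rfl
    | succ t ih => rw [Function.iterate_succ_apply', ih, pow_succ']; rfl
  have : Finite (Function.End (Option S)) := inferInstanceAs (Finite (Option S → Option S))
  obtain ⟨t, ht, hf⟩ := exists_isIdempotentElem_pow f
  let F : ℕ → Option S := fun n => if n = 0 then none else some (run δ s₀ (kRepr k n))
  have hF : ∀ (n : ℕ) (d : Fin k), F (k * n + d) = δ' (F n) d :=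
    ignoreLeadingZeros_run_kRepr (by omega) δ s₀
  refine ⟨t, ht, Option S, inferInstance, fun s d => blockStep hpos δ' t s d, none,
    fun s => τ (s.getD s₀), fun z hz => ?_, fun z hz s => ?_, fun n => ?_⟩
  · simp only [hz, blockStep_zero_right]
    exact Function.iterate_fixed (by simp [δ', ignoreLeadingZeros]) t
  · simp only [hz, hpow]
    exact congrFun hf s
  · rw [run_kRepr_eq (Nat.one_lt_pow (by omega) (by omega)) _ none F rfl
      fun n d => apply_pow_mul_add_eq_blockStep hpos δ' F hF t n d d.isLt, hτ n]
    rcases eq_or_ne n 0 with rfl | hn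
    · simp [F, kRepr_zero, run]
    · simp [F, hn]
end

section
/- In the setting of the previous lemma (k, l ≥ 2 multiplicatively independent, a produced by an idempotent k-automaton 𝒜 ignoring leading 0's, b produced by an idempotent l-automaton ℬ ignoring leading 0's, C and D strongly connected components of 𝒜 and ℬ respectively, and s ∈ C, r ∈ D the states for which each Z_m has positive upper density), if moreover a and b coincide almost everywhere, then the sequences ã = a_{𝒜,s} and b̃ = a_{ℬ,r} are equal: ã(m) = b̃(m) for all m ∈ ℕ. -/
open Filter

/-- A set of natural numbers has upper density zero if some translate of it is contained
in a set of upper density zero. -/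
theorem upperDensity_eq_zero_of_add_mem {A B : Set ℕ} (m : ℕ)
    (hAB : ∀ n ∈ A, n + m ∈ B) (hB : upperDensity B = 0) : upperDensity A = 0 := by
  have card_le (X : Set ℕ) (n : ℕ) : Nat.card ↥(X ∩ Set.Iio n) ≤ n := by
    have h := Set.ncard_le_ncard (Set.inter_subset_right : X ∩ Set.Iio n ⊆ Set.Iio n)
      (Set.finite_Iio n)
    rwa [Set.ncard_eq_toFinset_card' (Set.Iio n), Set.toFinset_Iio, Nat.card_Iio] at h
  have card_shift (n : ℕ) :
      Nat.card ↥(A ∩ Set.Iio n) ≤ Nat.card ↥(B ∩ Set.Iio n) + m := by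
    have hsub : (· + m) '' (A ∩ Set.Iio n) ⊆ (B ∩ Set.Iio n) ∪ Set.Ico n (n + m) := by
      rintro _ ⟨x, ⟨hxA, hxn⟩, rfl⟩
      rcases lt_or_ge (x + m) n with h | h
      · exact Or.inl ⟨hAB x hxA, h⟩
      · exact Or.inr ⟨h, Nat.add_lt_add_right hxn m⟩
    have hfin : (B ∩ Set.Iio n ∪ Set.Ico n (n + m)).Finite :=
      ((Set.finite_Iio n).inter_of_right B).union (Set.finite_Ico _ _)
    have hIco : (Set.Ico n (n + m)).ncard = m := by
      simp [Set.ncard_eq_toFinset_card']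
    calc Nat.card ↥(A ∩ Set.Iio n) = ((· + m) '' (A ∩ Set.Iio n)).ncard :=
          (Set.ncard_image_of_injective _ (add_left_injective m)).symm
      _ ≤ (B ∩ Set.Iio n ∪ Set.Ico n (n + m)).ncard := Set.ncard_le_ncard hsub hfin
      _ ≤ (B ∩ Set.Iio n).ncard + (Set.Ico n (n + m)).ncard := Set.ncard_union_le _ _
      _ = Nat.card ↥(B ∩ Set.Iio n) + m := by rw [hIco]; rfl
  have ratio_nonneg (n : ℕ) : (0 : ℝ) ≤ (Nat.card ↥(B ∩ Set.Iio n) : ℝ) / n := by positivity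
  have ratio_le_one (n : ℕ) : (Nat.card ↥(B ∩ Set.Iio n) : ℝ) / n ≤ 1 :=
    div_le_one_of_le₀ (by exact_mod_cast card_le B n) (by positivity)
  have hbdd : IsBoundedUnder (· ≤ ·) atTop
      (fun n : ℕ => (Nat.card ↥(B ∩ Set.Iio n) : ℝ) / n) := isBoundedUnder_of ⟨1, ratio_le_one⟩
  have hbdd' : IsBoundedUnder (· ≥ ·) atTop
      (fun n : ℕ => (Nat.card ↥(B ∩ Set.Iio n) : ℝ) / n) := isBoundedUnder_of ⟨0, ratio_nonneg⟩
  have hB0 : Tendsto (fun n : ℕ => (Nat.card ↥(B ∩ Set.Iio n) : ℝ) / n) atTop (nhds 0) :=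
    tendsto_of_le_liminf_of_limsup_le
      (le_liminf_of_le hbdd.isCoboundedUnder_ge (Eventually.of_forall ratio_nonneg))
      hB.le hbdd hbdd'
  have hsum := hB0.add (tendsto_const_div_atTop_nhds_zero_nat (m : ℝ))
  rw [add_zero] at hsum
  refine (squeeze_zero (fun n => by positivity) (fun n => ?_) hsum).limsup_eq
  rw [← add_div]
  gcongr
  exact_mod_cast card_shift n

/-- In the setting of the previous lemma, if moreover `a` and `b` coincide almost
everywhere, then the sequences `ã = a_{𝒜,s}` and `b̃ = a_{ℬ,r}` are equal. -/
theorem tilde_sequences_equal {S S' Ω : Type}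
    [Fintype S] [Fintype S'] [Fintype Ω]
    (k l : ℕ) (hk : 2 ≤ k) (hl : 2 ≤ l) (hind : MultIndep k l)
    (δ : S → Fin k → S) (s₀ : S) (τ : S → Ω)
    (δ' : S' → Fin l → S') (s₀' : S') (τ' : S' → Ω)
    (z₀ : Fin k) (hz₀ : (z₀ : ℕ) = 0) (z₀' : Fin l) (hz₀' : (z₀' : ℕ) = 0)
    (hzero : δ s₀ z₀ = s₀) (hzero' : δ' s₀' z₀' = s₀')
    (hidem : ∀ s : S, δ (δ s z₀) z₀ = δ s z₀)
    (hidem' : ∀ s : S', δ' (δ' s z₀') z₀' = δ' s z₀')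
    (hacc : ∀ s : S, ∃ w : List (Fin k), run δ s₀ w = s)
    (hacc' : ∀ s : S', ∃ w : List (Fin l), run δ' s₀' w = s)
    (a : ℕ → Ω) (b : ℕ → Ω)
    (ha : ∀ n : ℕ, a n = τ (run δ s₀ (kRepr k n)))
    (hb : ∀ n : ℕ, b n = τ' (run δ' s₀' (kRepr l n)))
    (C : Set S) (hC : IsSCC δ C) (D : Set S') (hD : IsSCC δ' D)
    (s : S) (hs : s ∈ C) (r : S') (hr : r ∈ D)
    (hZ : ∀ m : ℕ,
      0 < upperDensity {n : ℕ | ∀ i < m,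
        a (n + i) = τ (run δ s (kRepr k i)) ∧
        b (n + i) = τ' (run δ' r (kRepr l i))})
    (hae : upperDensity {n : ℕ | a n ≠ b n} = 0) :
    ∀ m : ℕ, τ (run δ s (kRepr k m)) = τ' (run δ' r (kRepr l m)) := by
  intro m
  by_contra hne
  refine (hZ (m + 1)).ne' (upperDensity_eq_zero_of_add_mem m (fun n hn => ?_) hae)
  obtain ⟨hn₁, hn₂⟩ := hn m m.lt_succ_self
  change a (n + m) ≠ b (n + m)
  rwa [hn₁, hn₂]
end

section
/- Let k, l ≥ 2 be multiplicatively independent integers. Let a be a k-automatic sequence and b an l-automatic sequence, both with values in a finite set Ω. Suppose that a and b coincide almost everywhere and that both a and b are uniformly recurrent. Then a = b and this common sequence is periodic. (One may assume as input Fagnot's theorem: if k, l are multiplicatively independent, a is k-automatic, b is l-automatic, and ℒ(a) = ℒ(b), then a and b are ultimately periodic.) -/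
open Filter

/-- A set of upper density zero misses some window of any prescribed length. -/
theorem exists_window_disjoint_of_upperDensity_eq_zero {A : Set ℕ} (hA : upperDensity A = 0)
    (M : ℕ) : ∃ N : ℕ, ∀ j < M, N + j ∉ A := by
  by_contra! h
  have hM : 0 < M := by
    obtain ⟨j, hj, -⟩ := h 0
    omega
  choose f hf hfA using fun m : ℕ => h (m * M)
  have hcard (m : ℕ) : m ≤ Nat.card ↥(A ∩ Set.Iio (m * M)) := by
    have hfin : (A ∩ Set.Iio (m * M)).Finite := (Set.finite_Iio _).inter_of_right A
    have hsub : (fun i => i * M + f i) '' Set.Iio m ⊆ A ∩ Set.Iio (m * M) := by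
      rintro _ ⟨i, hi, rfl⟩
      refine ⟨hfA i, ?_⟩
      have h₁ : (i + 1) * M ≤ m * M := Nat.mul_le_mul_right M hi
      have h₂ := hf i
      simp only [Set.mem_Iio]
      linarith
    have hinj : Function.Injective fun i => i * M + f i := by
      intro i j hij
      have hdiv (i : ℕ) : (i * M + f i) / M = i := by
        rw [Nat.mul_comm, Nat.mul_add_div hM, Nat.div_eq_of_lt (hf i), Nat.add_zero]
      rw [← hdiv i, ← hdiv j]
      exact congrArg (· / M) hij
    have hle := Set.ncard_le_ncard hsub hfin
    rw [Set.ncard_image_of_injective _ hinj] at hle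
    simpa [Set.ncard_eq_toFinset_card'] using hle
  have hbdd : IsBoundedUnder (· ≤ ·) atTop
      (fun n : ℕ => (Nat.card ↥(A ∩ Set.Iio n) : ℝ) / n) := by
    refine isBoundedUnder_of ⟨1, fun n => div_le_one_of_le₀ ?_ n.cast_nonneg⟩
    have hle := Set.ncard_le_ncard (Set.inter_subset_right : A ∩ Set.Iio n ⊆ Set.Iio n)
      (Set.finite_Iio n)
    have hn : (Set.Iio n).ncard = n := by simp [Set.ncard_eq_toFinset_card']
    rw [hn] at hle
    exact_mod_cast hle
  have hfreq : ∃ᶠ n : ℕ in atTop,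
      (1 : ℝ) / M ≤ (Nat.card ↥(A ∩ Set.Iio n) : ℝ) / n := by
    refine frequently_atTop.mpr fun n => ⟨(n + 1) * M, by nlinarith, ?_⟩
    have hM' : (0 : ℝ) < M := by exact_mod_cast hM
    rw [div_le_div_iff₀ hM' (by positivity)]
    have := hcard (n + 1)
    have hc : ((n + 1 : ℕ) : ℝ) ≤ Nat.card ↥(A ∩ Set.Iio ((n + 1) * M)) := by exact_mod_cast this
    rw [Nat.cast_mul, one_mul]
    exact mul_le_mul_of_nonneg_right hc hM'.le
  have hle : (1 : ℝ) / M ≤ upperDensity A := le_limsup_of_frequently_le hfreq hbdd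
  rw [hA] at hle
  have : (0 : ℝ) < 1 / M := by positivity
  linarith

/-- If a uniformly recurrent sequence coincides almost everywhere with another sequence, then
all its factors are factors of the other sequence. -/
theorem UniformlyRecurrent.isFactor_of_upperDensity_eq_zero {Ω : Type*} {a b : ℕ → Ω}
    (ha : UniformlyRecurrent a) (hab : upperDensity {n : ℕ | a n ≠ b n} = 0) {w : List Ω}
    (hw : IsFactor a w) : IsFactor b w := by
  obtain ⟨C, hC⟩ := ha w hw
  obtain ⟨N, hN⟩ := exists_window_disjoint_of_upperDensity_eq_zero hab (C + w.length)
  obtain ⟨i, hNi, hiC, hi⟩ := hC N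
  refine ⟨i, fun j hj => (hi j hj).trans ?_⟩
  have := hN (i + j - N) (by omega)
  rw [Nat.add_sub_of_le (by omega)] at this
  simpa using this

/-- A uniformly recurrent, ultimately periodic sequence is periodic, with the same period. -/
theorem UniformlyRecurrent.periodic_of_ultimately {Ω : Type*} {a : ℕ → Ω}
    (ha : UniformlyRecurrent a) {q N : ℕ} (hq : ∀ n : ℕ, N ≤ n → a (n + q) = a n) :
    Function.Periodic a q := by
  intro n
  obtain ⟨C, hC⟩ := ha (List.ofFn fun j : Fin (q + 1) => a (n + j))
    ⟨n, fun j hj => by simp only [List.get_ofFn, Fin.val_cast]⟩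
  obtain ⟨i, hNi, -, hi⟩ := hC N
  have h₀ := hi 0 (by simp)
  have h₁ := hi q (by simp)
  simp only [List.get_ofFn, Fin.val_cast, Nat.add_zero] at h₀ h₁
  rw [h₁, h₀, hq i hNi]

/-- Periodic sequences that coincide almost everywhere are equal. -/
theorem Function.Periodic.eq_of_upperDensity_eq_zero {Ω : Type*} {a b : ℕ → Ω} {p q : ℕ}
    (ha : Function.Periodic a p) (hb : Function.Periodic b q) (hp : 1 ≤ p) (hq : 1 ≤ q)
    (hab : upperDensity {n : ℕ | a n ≠ b n} = 0) : a = b := by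
  obtain ⟨N, hN⟩ := exists_window_disjoint_of_upperDensity_eq_zero hab (p * q)
  have hpq : 0 < p * q := Nat.mul_pos hp hq
  have ha' : Function.Periodic a (p * q) := by simpa [Nat.mul_comm] using ha.nat_mul q
  have hb' : Function.Periodic b (p * q) := by simpa using hb.nat_mul p
  funext n
  have hmod : (N + (n + N * (p * q) - N) % (p * q)) % (p * q) = n % (p * q) := by
    have : N ≤ N * (p * q) := Nat.le_mul_of_pos_right N hpq
    rw [Nat.add_mod_mod, Nat.add_sub_of_le (by omega), Nat.add_mul_mod_self_right]
  have hj := hN _ (Nat.mod_lt (n + N * (p * q) - N) hpq)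
  rw [← ha'.map_mod_nat n, ← hb'.map_mod_nat n, ← hmod, ha'.map_mod_nat, hb'.map_mod_nat]
  simpa using hj

/-- If `k, l ≥ 2` are multiplicatively independent, `a` is `k`-automatic, `b` is
`l`-automatic, `a` and `b` coincide almost everywhere and are both uniformly
recurrent, then `a = b` and this common sequence is periodic. One may assume as
input Fagnot's theorem: automatic sequences with respect to multiplicatively
independent bases having the same language are ultimately periodic. -/
theorem uniformly_recurrent_ae_coincide_eq_periodic {Ω : Type} [Fintype Ω]
    (k l : ℕ) (hk : 2 ≤ k) (hl : 2 ≤ l) (hind : MultIndep k l)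
    (a b : ℕ → Ω) (ha : IsAutomatic k a) (hb : IsAutomatic l b)
    (hae : upperDensity {n : ℕ | a n ≠ b n} = 0)
    (hua : UniformlyRecurrent a) (hub : UniformlyRecurrent b)
    (fagnot : ∀ (Ω' : Type) (k' l' : ℕ), 2 ≤ k' → 2 ≤ l' → MultIndep k' l' →
      ∀ a' b' : ℕ → Ω', IsAutomatic k' a' → IsAutomatic l' b' →
      (∀ w : List Ω', IsFactor a' w ↔ IsFactor b' w) →
      (∃ q : ℕ, 1 ≤ q ∧ ∃ N : ℕ, ∀ n : ℕ, N ≤ n → a' (n + q) = a' n) ∧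
      (∃ q : ℕ, 1 ≤ q ∧ ∃ N : ℕ, ∀ n : ℕ, N ≤ n → b' (n + q) = b' n)) :
    a = b ∧ ∃ q : ℕ, 1 ≤ q ∧ ∀ n : ℕ, a (n + q) = a n := by
  have hae' : upperDensity {n : ℕ | b n ≠ a n} = 0 := by simpa only [ne_comm] using hae
  obtain ⟨⟨p, hp, M, hpM⟩, q, hq, N, hqN⟩ := fagnot Ω k l hk hl hind a b ha hb fun w =>
    ⟨hua.isFactor_of_upperDensity_eq_zero hae, hub.isFactor_of_upperDensity_eq_zero hae'⟩
  have hap := hua.periodic_of_ultimately hpM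
  exact ⟨hap.eq_of_upperDensity_eq_zero (hub.periodic_of_ultimately hqN) hp hq hae, p, hp, hap⟩
end
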